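/- arXiv:1512.07382 — 9 statements merged into one kernel-verified Lean document; each statement's English description precedes it below -/
import Mathlib

section
/- For every free ultrafilter 𝒰 on ℕ there exist a free ultrafilter η on ℕ and a real number t ∈ [0,1] such that φ^𝒰(f) = φ_{(η,t)}(f) for every f ∈ ℓ∞. (Every element of 𝒞̃ has the special representation φ_{(η,t)}.) -/
open Filter

/-!
Write `M f x = (1/x) ∑_{1 ≤ i ≤ x} f i` for real `x > 0`. For bounded `f` this mean is slowly
varying: moving the cutoff from `y` to `x` changes it by `O((|x - y| + 1) / y)`, so `M f` has the
same limits along two asymptotically equivalent cutoffs. Given `𝒰`, let `t ∈ [0, 1]` be the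
`𝒰`-limit of the fractional part of `log₂ n`, and let `η` be the image of `𝒰` under
`n ↦ ⌊log₂ n⌋`. Then `n` is equivalent to `2 ^ t * 2 ^ ⌊log₂ n⌋` along `𝒰`.
-/

section CesaroMean

open Asymptotics
open scoped Topology

variable {E : Type*} [NormedAddCommGroup E] {f : ℕ → E} {C : ℝ}

theorem norm_sum_Icc_sub_sum_Icc_le (hf : ∀ n, ‖f n‖ ≤ C) (k m n : ℕ) :
    ‖∑ i ∈ Finset.Icc k m, f i - ∑ i ∈ Finset.Icc k n, f i‖ ≤ C * |(m : ℝ) - n| := by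
  have hC : 0 ≤ C := (norm_nonneg _).trans (hf 0)
  wlog hnm : n ≤ m generalizing m n
  · rw [norm_sub_rev, abs_sub_comm]
    exact this n m (le_of_not_ge hnm)
  have hcard : (Finset.Icc k m \ Finset.Icc k n).card ≤ m - n := by
    refine (Finset.card_le_card fun i hi => ?_).trans_eq (Nat.card_Ioc n m)
    simp only [Finset.mem_sdiff, Finset.mem_Icc, Finset.mem_Ioc] at hi ⊢
    omega
  rw [← Finset.sum_sdiff_eq_sub (Finset.Icc_subset_Icc_right hnm)]
  calc ‖∑ i ∈ Finset.Icc k m \ Finset.Icc k n, f i‖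
      ≤ (Finset.Icc k m \ Finset.Icc k n).card * C := by
        simpa using norm_sum_le_of_le _ fun i _ => hf i
    _ ≤ ((m - n : ℕ) : ℝ) * C := by gcongr
    _ = C * |(m : ℝ) - n| := by
        rw [mul_comm, Nat.cast_sub hnm, abs_of_nonneg (sub_nonneg.2 (Nat.cast_le.2 hnm))]

theorem abs_natFloor_sub_natFloor_le (x y : ℝ) :
    |(⌊x⌋₊ : ℝ) - ⌊y⌋₊| ≤ |x - y| + 1 := by
  have floor_le (x y : ℝ) : (⌊x⌋₊ : ℝ) ≤ ⌊y⌋₊ + |x - y| + 1 := by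
    rcases le_total x 0 with hx | hx
    · rw [Nat.floor_of_nonpos hx, Nat.cast_zero]
      positivity
    · linarith [Nat.floor_le hx, Nat.lt_floor_add_one y, le_abs_self (x - y)]
  have hxy := floor_le x y
  have hyx := floor_le y x
  rw [abs_sub_comm] at hyx
  exact abs_sub_le_iff.2 ⟨by linarith, by linarith⟩

variable [NormedSpace ℝ E]

/-- The Cesàro mean of `f` up to a real cutoff `x`. The sum is divided by `x` rather than by the
number `⌊x⌋₊` of terms, so that the averages defining `φ^𝒰` and `φ_{(η,t)}` are both values of this
one function, at `n` and at `2 ^ t * 2 ^ n`. -/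
noncomputable def cesaroMean (f : ℕ → E) (x : ℝ) : E :=
  (1 / x) • ∑ i ∈ Finset.Icc 1 ⌊x⌋₊, f i

theorem smul_cesaroMean (f : ℕ → E) (x : ℝ) :
    x • cesaroMean f x = ∑ i ∈ Finset.Icc 1 ⌊x⌋₊, f i := by
  rcases eq_or_ne x 0 with rfl | hx
  · simp
  · rw [cesaroMean, smul_smul, mul_one_div_cancel hx, one_smul]

theorem norm_cesaroMean_le (hf : ∀ n, ‖f n‖ ≤ C) (x : ℝ) : ‖cesaroMean f x‖ ≤ C := by
  have hC : 0 ≤ C := (norm_nonneg _).trans (hf 0)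
  rcases le_or_gt x 0 with hx | hx
  · simpa [cesaroMean, Nat.floor_of_nonpos hx] using hC
  · have hsum : ‖∑ i ∈ Finset.Icc 1 ⌊x⌋₊, f i‖ ≤ ⌊x⌋₊ * C := by
      simpa using norm_sum_le_of_le (Finset.Icc 1 ⌊x⌋₊) fun i _ => hf i
    rw [cesaroMean, norm_smul, norm_div, norm_one, Real.norm_of_nonneg hx.le,
      one_div_mul_eq_div, div_le_iff₀' hx]
    exact hsum.trans (by gcongr; exact Nat.floor_le hx.le)

theorem norm_cesaroMean_sub_le (hf : ∀ n, ‖f n‖ ≤ C) (x : ℝ) {y : ℝ} (hy : 0 < y) :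
    ‖cesaroMean f x - cesaroMean f y‖ ≤ C * (2 * |(x - y) / y| + 1 / y) := by
  have hC : 0 ≤ C := (norm_nonneg _).trans (hf 0)
  have hsplit : y • (cesaroMean f x - cesaroMean f y) = (y - x) • cesaroMean f x +
      (∑ i ∈ Finset.Icc 1 ⌊x⌋₊, f i - ∑ i ∈ Finset.Icc 1 ⌊y⌋₊, f i) := by
    rw [← smul_cesaroMean, ← smul_cesaroMean]
    module
  have hbound : y * ‖cesaroMean f x - cesaroMean f y‖ ≤ C * (2 * |x - y| + 1) :=
    calc y * ‖cesaroMean f x - cesaroMean f y‖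
        = ‖(y - x) • cesaroMean f x +
            (∑ i ∈ Finset.Icc 1 ⌊x⌋₊, f i - ∑ i ∈ Finset.Icc 1 ⌊y⌋₊, f i)‖ := by
          rw [← hsplit, norm_smul, Real.norm_of_nonneg hy.le]
      _ ≤ |x - y| * C + C * (|x - y| + 1) := by
          refine norm_add_le_of_le ?_ ?_
          · rw [norm_smul, Real.norm_eq_abs, abs_sub_comm]
            gcongr
            exact norm_cesaroMean_le hf x
          · refine (norm_sum_Icc_sub_sum_Icc_le hf _ _ _).trans ?_
            gcongr
            exact abs_natFloor_sub_natFloor_le x y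
      _ = C * (2 * |x - y| + 1) := by ring
  calc ‖cesaroMean f x - cesaroMean f y‖
      ≤ C * (2 * |x - y| + 1) / y := (le_div_iff₀' hy).2 hbound
    _ = C * (2 * |(x - y) / y| + 1 / y) := by rw [abs_div, abs_of_pos hy]; ring

theorem tendsto_cesaroMean_iff_of_isEquivalent (hf : ∀ n, ‖f n‖ ≤ C) {ι : Type*} {l : Filter ι}
    {u v : ι → ℝ} (huv : IsEquivalent l u v) (hv : Tendsto v l atTop) (a : E) :
    Tendsto (fun i => cesaroMean f (u i)) l (𝓝 a) ↔
      Tendsto (fun i => cesaroMean f (v i)) l (𝓝 a) := by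
  have hrel : Tendsto (fun i => (u i - v i) / v i) l (𝓝 0) :=
    huv.isLittleO.tendsto_div_nhds_zero
  have hinv : Tendsto (fun i => 1 / v i) l (𝓝 0) := hv.const_div_atTop 1
  have hbound : Tendsto (fun i => C * (2 * |(u i - v i) / v i| + 1 / v i)) l (𝓝 0) := by
    simpa using ((hrel.abs.const_mul 2).add hinv).const_mul C
  refine tendsto_iff_of_dist (squeeze_zero' (Eventually.of_forall fun _ => dist_nonneg) ?_ hbound)
  filter_upwards [hv.eventually_gt_atTop 0] with i hi
  rw [dist_eq_norm]
  exact norm_cesaroMean_sub_le hf (u i) hi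

theorem exists_mem_tendsto_of_isCompact {X ι : Type*} [TopologicalSpace X] {K : Set X}
    (hK : IsCompact K) (𝒰 : Ultrafilter ι) {g : ι → X} (hg : ∀ i, g i ∈ K) :
    ∃ x ∈ K, Tendsto g 𝒰 (𝓝 x) :=
  hK.ultrafilter_le_nhds' (𝒰.map g) (Ultrafilter.mem_map.2 (Eventually.of_forall hg))

theorem exists_tendsto_cesaroMean [ProperSpace E] (hf : ∀ n, ‖f n‖ ≤ C) {ι : Type*}
    (𝒰 : Ultrafilter ι) (u : ι → ℝ) :
    ∃ a : E, Tendsto (fun i => cesaroMean f (u i)) 𝒰 (𝓝 a) := by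
  obtain ⟨a, -, ha⟩ := exists_mem_tendsto_of_isCompact (isCompact_closedBall (0 : E) C) 𝒰
    fun i => mem_closedBall_zero_iff.2 (norm_cesaroMean_le hf (u i))
  exact ⟨a, ha⟩

theorem limUnder_cesaroMean_eq_of_tendsto_imp [ProperSpace E] (hf : ∀ n, ‖f n‖ ≤ C)
    {ι κ : Type*} {𝒰 : Ultrafilter ι} {u : ι → ℝ} {l : Filter κ} [l.NeBot] {g : κ → E}
    (h : ∀ a, Tendsto (fun i => cesaroMean f (u i)) 𝒰 (𝓝 a) → Tendsto g l (𝓝 a)) :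
    limUnder 𝒰 (fun i => cesaroMean f (u i)) = limUnder l g := by
  obtain ⟨a, ha⟩ := exists_tendsto_cesaroMean hf 𝒰 u
  exact ha.limUnder_eq.trans (h a ha).limUnder_eq.symm

theorem rpow_fract_logb_mul_pow_natFloor_logb {b x : ℝ} (hb : 1 < b) (hx : 1 ≤ x) :
    b ^ Int.fract (Real.logb b x) * b ^ ⌊Real.logb b x⌋₊ = x := by
  have hb₀ : 0 < b := one_pos.trans hb
  rw [← Real.rpow_natCast, ← Real.rpow_add hb₀,
    natCast_floor_eq_intCast_floor (Real.logb_nonneg hb hx), Int.fract_add_floor,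
    Real.rpow_logb hb₀ hb.ne' (one_pos.trans_le hx)]

theorem exists_isEquivalent_rpow_mul_pow_natFloor_logb {b : ℝ} (hb : 1 < b) {ι : Type*}
    {𝒰 : Ultrafilter ι} {u : ι → ℝ} (hu : Tendsto u 𝒰 atTop) :
    ∃ t ∈ Set.Icc (0 : ℝ) 1,
      IsEquivalent 𝒰 u fun i => b ^ t * b ^ ⌊Real.logb b (u i)⌋₊ := by
  have hb₀ : 0 < b := one_pos.trans hb
  obtain ⟨t, ht, hlim⟩ := exists_mem_tendsto_of_isCompact isCompact_Icc 𝒰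
    fun i => ⟨Int.fract_nonneg (Real.logb b (u i)), (Int.fract_lt_one _).le⟩
  have hpow : Tendsto (fun i => b ^ Int.fract (Real.logb b (u i))) 𝒰 (𝓝 (b ^ t)) :=
    (Real.continuousAt_const_rpow hb₀.ne').tendsto.comp hlim
  have hequiv := ((isEquivalent_const_iff_tendsto (Real.rpow_pos_of_pos hb₀ t).ne').2 hpow).mul
    (IsEquivalent.refl (u := fun i => b ^ ⌊Real.logb b (u i)⌋₊))
  refine ⟨t, ht, hequiv.congr_left ?_⟩
  filter_upwards [hu.eventually_ge_atTop 1] with i hi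
  exact rpow_fract_logb_mul_pow_natFloor_logb hb hi

theorem stmt0_general {b : ℝ} (hb : 1 < b) (𝒰 : Ultrafilter ℕ)
    (h𝒰 : (𝒰 : Filter ℕ) ≤ cofinite) :
    ∃ (η : Ultrafilter ℕ) (t : ℝ), (η : Filter ℕ) ≤ cofinite ∧ t ∈ Set.Icc (0 : ℝ) 1 ∧
      ∀ (E : Type*) [NormedAddCommGroup E] [NormedSpace ℝ E] (f : ℕ → E),
        (∃ C : ℝ, ∀ n, ‖f n‖ ≤ C) → ∀ a : E,
          Tendsto (fun n : ℕ => cesaroMean f n) 𝒰 (𝓝 a) ↔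
            Tendsto (fun n : ℕ => cesaroMean f (b ^ t * b ^ n)) η (𝓝 a) := by
  rw [Nat.cofinite_eq_atTop] at h𝒰 ⊢
  have hcast : Tendsto (fun n : ℕ => (n : ℝ)) 𝒰 atTop := tendsto_natCast_atTop_atTop.mono_left h𝒰
  have hlog : Tendsto (fun n : ℕ => ⌊Real.logb b n⌋₊) 𝒰 atTop :=
    tendsto_nat_floor_atTop.comp ((Real.tendsto_logb_atTop hb).comp hcast)
  obtain ⟨t, ht, hequiv⟩ := exists_isEquivalent_rpow_mul_pow_natFloor_logb hb hcast
  refine ⟨𝒰.map fun n => ⌊Real.logb b n⌋₊, t, hlog, ht, fun E _ _ f ⟨C, hf⟩ a => ?_⟩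
  rw [Ultrafilter.coe_map, tendsto_map'_iff]
  exact tendsto_cesaroMean_iff_of_isEquivalent hf hequiv (hequiv.tendsto_atTop hcast) a

end CesaroMean

/-- Every element `φ^𝒰` of `𝒞̃` (the functional
`f ↦ 𝒰-lim_n (1/n) ∑_{i=1}^n f(i)` for a free ultrafilter `𝒰` on `ℕ`) can be
written in the special form `φ_{(η,t)}` for some free ultrafilter `η` on `ℕ`
and some `t ∈ [0,1]`, where
`φ_{(η,t)}(f) = η-lim_n (1/(2^t·2^n)) ∑_{i=1}^{⌊2^t·2^n⌋} f(i)`. -/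
theorem stmt0 (𝒰 : Ultrafilter ℕ) (h𝒰 : (𝒰 : Filter ℕ) ≤ Filter.cofinite) :
    ∃ (η : Ultrafilter ℕ) (t : ℝ), (η : Filter ℕ) ≤ Filter.cofinite ∧ t ∈ Set.Icc (0:ℝ) 1 ∧
      ∀ f : ℕ → ℝ, (∃ C : ℝ, ∀ n, |f n| ≤ C) →
        limUnder (𝒰 : Filter ℕ)
            (fun n : ℕ => (1 / (n : ℝ)) * ∑ i ∈ Finset.Icc 1 n, f i) =
          limUnder (η : Filter ℕ)
            (fun n : ℕ => (1 / ((2:ℝ) ^ t * 2 ^ n)) *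
              ∑ i ∈ Finset.Icc 1 ⌊(2:ℝ) ^ t * 2 ^ n⌋₊, f i) := by
  obtain ⟨η, t, hη, ht, hlim⟩ := stmt0_general one_lt_two 𝒰 h𝒰
  exact ⟨η, t, hη, ht, fun f ⟨C, hf⟩ => by
    simpa only [cesaroMean, Nat.floor_natCast, smul_eq_mul] using
      limUnder_cesaroMean_eq_of_tendsto_imp hf fun a => (hlim ℝ f ⟨C, hf⟩ a).1⟩
end

section
/- Let η, η′ be free ultrafilters on ℕ and t, t′ ∈ [0,1) with (η,t) ≠ (η′,t′). Then there exists a Borel set X ⊆ [1,∞) such that ψ_{(η,t)}(1_X) ≠ ψ_{(η′,t′)}(1_X); in particular the functionals ψ_{(η,t)} and ψ_{(η′,t′)} on L^∞[1,∞) are distinct. -/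
open Filter MeasureTheory

/-!
Choose sets of exponents `n + t` and `m + t'`, large for `η` and `η'`, which stay at distance at
least `δ` from each other. After halving `δ`, and exchanging the two pairs if necessary, every
`n + t` is at least `δ`. Put `ρ = 2 ^ (-δ)` and let `X` be the union of the intervals `(ρ p, p]`
over the points `p = 2 ^ (n + t)`. At each `p` the mean of `1_X` is at least `1 - ρ`. A point
`x = 2 ^ (m + t')` satisfies `p ≤ ρ x` or `x ≤ ρ p` for every `p`, so the last interval before `x`
contributes at most `ρ (1 - ρ)` to the mean at `x`. The earlier ones contribute at most a prescribed
`κ < (1 - ρ) ^ 2` once the exponents are thinned to a residue class modulo a large integer, and some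
residue class always belongs to `η`.
-/

theorem tendsto_limUnder_of_isCompact {α E : Type*} [TopologicalSpace E] [Nonempty E]
    {l : Ultrafilter α} {f : α → E} {K : Set E} (hK : IsCompact K) (hf : ∀ᶠ a in l, f a ∈ K) :
    Tendsto f l (nhds (limUnder l f)) := by
  obtain ⟨x, -, hx⟩ := hK.ultrafilter_le_nhds (l.map f) (le_principal_iff.2 hf)
  exact tendsto_nhds_limUnder ⟨x, hx⟩

section Separation

theorem exists_mem_forall_add_le (η : Ultrafilter ℕ) (K : ℕ) :
    ∃ S ∈ η, ∀ m ∈ S, ∀ n ∈ S, m < n → m + K ≤ n := by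
  obtain ⟨r, hr⟩ := (η.map (Nat.cast : ℕ → ZMod (K + 1))).eq_pure_of_finite
  have hS : {n : ℕ | (n : ZMod (K + 1)) = r} ∈ η := by
    have : {r} ∈ η.map (Nat.cast : ℕ → ZMod (K + 1)) := hr ▸ Ultrafilter.mem_pure.2 rfl
    exact this
  refine ⟨_, hS, fun m hm n hn hmn => ?_⟩
  have hdvd : K + 1 ∣ n - m :=
    (Nat.modEq_iff_dvd' hmn.le).1 ((ZMod.natCast_eq_natCast_iff _ _ _).1 (hm.trans hn.symm))
  have := Nat.le_of_dvd (Nat.sub_pos_of_lt hmn) hdvd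
  lia

theorem exists_mem_exists_mem_disjoint {α : Type*} {η η' : Ultrafilter α} (h : η ≠ η') :
    ∃ A ∈ η, ∃ B ∈ η', Disjoint A B :=
  Filter.disjoint_iff.1 <| Ultrafilter.disjoint_iff_not_le.2 fun hle =>
    h (Ultrafilter.coe_le_coe.1 hle)

theorem exists_pos_forall_le_abs_sub_intCast {s : ℝ} (hs : s ∉ Set.range ((↑) : ℤ → ℝ)) :
    ∃ δ > 0, ∀ k : ℤ, δ ≤ |s - k| :=
  ⟨|s - round s|, abs_pos.2 fun h => hs ⟨round s, (sub_eq_zero.1 h).symm⟩, round_le s⟩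

theorem sub_notMem_range_intCast {t t' : ℝ} (ht : t ∈ Set.Ico (0 : ℝ) 1)
    (ht' : t' ∈ Set.Ico (0 : ℝ) 1) (hne : t ≠ t') : t - t' ∉ Set.range ((↑) : ℤ → ℝ) := by
  rintro ⟨k, hk⟩
  have hlt : (k : ℝ) < 1 := by linarith [ht.2, ht'.1]
  have hgt : (-1 : ℝ) < k := by linarith [ht.1, ht'.2]
  have hk0 : k = 0 := by
    have : k < 1 := by exact_mod_cast hlt
    have : -1 < k := by exact_mod_cast hgt
    lia
  exact hne (sub_eq_zero.1 (by rw [← hk, hk0, Int.cast_zero]))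

theorem exists_separated_translates {η η' : Ultrafilter ℕ} {t t' : ℝ}
    (ht : t ∈ Set.Ico (0 : ℝ) 1) (ht' : t' ∈ Set.Ico (0 : ℝ) 1) (hne : ¬(η = η' ∧ t = t')) :
    ∃ δ > 0, ∃ A ∈ η, ∃ B ∈ η', ∀ n ∈ A, ∀ m ∈ B, δ ≤ |(n : ℝ) + t - (m + t')| := by
  by_cases h : t = t'
  · obtain ⟨A, hA, B, hB, hAB⟩ := exists_mem_exists_mem_disjoint fun hη => hne ⟨hη, h⟩
    refine ⟨1, one_pos, A, hA, B, hB, fun n hn m hm => ?_⟩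
    rw [h, add_sub_add_right_eq_sub]
    exact Nat.pairwise_one_le_dist (hAB.ne_of_mem hn hm)
  · obtain ⟨δ, hδ, hk⟩ :=
      exists_pos_forall_le_abs_sub_intCast (sub_notMem_range_intCast ht ht' h)
    refine ⟨δ, hδ, Set.univ, univ_mem, Set.univ, univ_mem, fun n _ m _ => ?_⟩
    convert hk (m - n) using 2
    push_cast
    ring

end Separation

section MeanDensity

/-- The mean over `[0, x]` of the indicator function of the part of `X` in `[1, ∞)`. The functional
`ψ_{(η,t)}` applied to `1_X` is the limit of these means along the points `2 ^ (n + t)`. -/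
noncomputable def meanDensity (X : Set ℝ) (x : ℝ) : ℝ :=
  x⁻¹ * volume.real (Set.Icc 1 x ∩ X)

variable {X : Set ℝ} {x : ℝ}

theorem inv_mul_setIntegral_indicator_one (hX : MeasurableSet X) :
    x⁻¹ * ∫ y in Set.Icc 1 x, X.indicator (fun _ => (1 : ℝ)) y = meanDensity X x := by
  rw [setIntegral_indicator hX, setIntegral_const, smul_eq_mul, mul_one, meanDensity]

theorem meanDensity_mem_Icc (hx : 0 < x) : meanDensity X x ∈ Set.Icc 0 1 := by
  have hvol : volume.real (Set.Icc 1 x ∩ X) ≤ x := by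
    calc volume.real (Set.Icc 1 x ∩ X)
        ≤ volume.real (Set.Icc 0 x) :=
          measureReal_mono (Set.inter_subset_left.trans (Set.Icc_subset_Icc_left zero_le_one))
            measure_Icc_lt_top.ne
      _ = x := by rw [Real.volume_real_Icc_of_le hx.le, sub_zero]
  exact ⟨by unfold meanDensity; positivity, inv_mul_le_one_of_le₀ hvol hx.le⟩

end MeanDensity

section LeftCollar

/-- The union of the intervals `(ρ p, p]` over `p ∈ P`: the test set which has large mean density
at the points of `P` and small mean density away from them. -/
def leftCollar (ρ : ℝ) (P : Set ℝ) : Set ℝ :=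
  ⋃ p ∈ P, Set.Ioc (ρ * p) p

variable {ρ κ x : ℝ} {P : Set ℝ}

theorem measurableSet_leftCollar (hP : P.Countable) : MeasurableSet (leftCollar ρ P) :=
  .biUnion hP fun _ _ => measurableSet_Ioc

theorem leftCollar_subset_Ici {a : ℝ} (hP : ∀ p ∈ P, a ≤ ρ * p) : leftCollar ρ P ⊆ Set.Ici a :=
  Set.iUnion₂_subset fun p hp _ hy => (hP p hp).trans hy.1.le

theorem one_sub_le_meanDensity_leftCollar {p : ℝ} (hρ : ρ ≤ 1) (hp : p ∈ P) (hp0 : 0 < p)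
    (hp1 : 1 ≤ ρ * p) : 1 - ρ ≤ meanDensity (leftCollar ρ P) p := by
  have hsub : Set.Ioc (ρ * p) p ⊆ Set.Icc 1 p ∩ leftCollar ρ P := fun y hy =>
    ⟨⟨hp1.trans hy.1.le, hy.2⟩, Set.mem_biUnion hp hy⟩
  have hvol := measureReal_mono (μ := volume) hsub
    (measure_inter_ne_top_of_left_ne_top measure_Icc_lt_top.ne)
  rw [Real.volume_real_Ioc_of_le (mul_le_of_le_one_left hp0.le hρ)] at hvol
  rw [meanDensity, le_inv_mul_iff₀ hp0]
  linarith

theorem volume_leftCollar_ne_top (hP : P.Subsingleton) : volume (leftCollar ρ P) ≠ ⊤ := by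
  rcases hP.eq_empty_or_singleton with rfl | ⟨p, rfl⟩ <;> simp [leftCollar]

theorem volume_real_leftCollar_le {c : ℝ} (hρ : ρ ≤ 1) (hc : 0 ≤ c) (hP : P.Subsingleton)
    (hPc : ∀ p ∈ P, p ≤ c) : volume.real (leftCollar ρ P) ≤ (1 - ρ) * c := by
  have hρ' : 0 ≤ 1 - ρ := sub_nonneg.2 hρ
  rcases hP.eq_empty_or_singleton with rfl | ⟨p, rfl⟩
  · simpa [leftCollar] using mul_nonneg hρ' hc
  · have hpc : (1 - ρ) * p ≤ (1 - ρ) * c := mul_le_mul_of_nonneg_left (hPc p rfl) hρ'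
    simp only [leftCollar, Set.biUnion_singleton, Real.volume_real_Ioc]
    exact max_le (by linarith) (mul_nonneg hρ' hc)

theorem Icc_inter_leftCollar_subset (hx : ∀ p ∈ P, p ≤ ρ * x ∨ x ≤ ρ * p) :
    Set.Icc 1 x ∩ leftCollar ρ P ⊆
      Set.Icc 0 (κ * x) ∪ leftCollar ρ (P ∩ Set.Ioc (κ * x) (ρ * x)) := by
  rintro y ⟨⟨hy1, hyx⟩, hy⟩
  obtain ⟨p, hp, hyp⟩ := Set.mem_iUnion₂.1 hy
  have hpx : p ≤ ρ * x := (hx p hp).resolve_right (hyp.1.trans_le hyx).not_ge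
  rcases le_or_gt p (κ * x) with h | h
  · exact .inl ⟨zero_le_one.trans hy1, hyp.2.trans h⟩
  · exact .inr (Set.mem_biUnion ⟨hp, h, hpx⟩ hyp)

theorem subsingleton_inter_Ioc_of_lacunary (hρ : ρ ≤ 1) (hκ : 0 ≤ κ) (hx0 : 0 ≤ x)
    (hP : ∀ p ∈ P, ∀ p' ∈ P, p < p' → p ≤ κ * p') :
    (P ∩ Set.Ioc (κ * x) (ρ * x)).Subsingleton := by
  have le_of_mem : ∀ p ∈ P ∩ Set.Ioc (κ * x) (ρ * x), ∀ p' ∈ P ∩ Set.Ioc (κ * x) (ρ * x),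
      p' ≤ p := by
    rintro p ⟨hp, hκp, -⟩ p' ⟨hp', -, hp'ρ⟩
    by_contra! hlt
    have hp'x : p' ≤ x := hp'ρ.trans (mul_le_of_le_one_left hx0 hρ)
    exact hκp.not_ge ((hP p hp p' hp' hlt).trans (mul_le_mul_of_nonneg_left hp'x hκ))
  exact fun p hp p' hp' => le_antisymm (le_of_mem p' hp' p hp) (le_of_mem p hp p' hp')

theorem meanDensity_leftCollar_le (hρ0 : 0 ≤ ρ) (hρ : ρ ≤ 1) (hκ : 0 ≤ κ) (hx0 : 0 < x)
    (hP : ∀ p ∈ P, ∀ p' ∈ P, p < p' → p ≤ κ * p') (hx : ∀ p ∈ P, p ≤ ρ * x ∨ x ≤ ρ * p) :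
    meanDensity (leftCollar ρ P) x ≤ κ + ρ * (1 - ρ) := by
  have hρx : 0 ≤ ρ * x := mul_nonneg hρ0 hx0.le
  have hQ := subsingleton_inter_Ioc_of_lacunary hρ hκ hx0.le hP
  have hvol : volume.real (Set.Icc 1 x ∩ leftCollar ρ P) ≤ κ * x + (1 - ρ) * (ρ * x) := by
    calc volume.real (Set.Icc 1 x ∩ leftCollar ρ P)
        ≤ volume.real
            (Set.Icc 0 (κ * x) ∪ leftCollar ρ (P ∩ Set.Ioc (κ * x) (ρ * x))) :=
          measureReal_mono (Icc_inter_leftCollar_subset hx)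
            (measure_union_ne_top measure_Icc_lt_top.ne (volume_leftCollar_ne_top hQ))
      _ ≤ volume.real (Set.Icc 0 (κ * x)) +
            volume.real (leftCollar ρ (P ∩ Set.Ioc (κ * x) (ρ * x))) :=
          measureReal_union_le _ _
      _ ≤ κ * x + (1 - ρ) * (ρ * x) := by
          gcongr
          · rw [Real.volume_real_Icc_of_le (by positivity), sub_zero]
          · exact volume_real_leftCollar_le hρ hρx hQ fun p hp => hp.2.2
  rw [meanDensity, inv_mul_le_iff₀ hx0]
  linarith

theorem limUnder_meanDensity_leftCollar_lt {α β : Type*} {l : Ultrafilter α} {l' : Ultrafilter β}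
    {u : α → ℝ} {v : β → ℝ} (hρ0 : 0 < ρ) (hρ : ρ ≤ 1) (hκ0 : 0 ≤ κ) (hκ : κ < (1 - ρ) ^ 2)
    (hP : ∀ p ∈ P, ∀ p' ∈ P, p < p' → p ≤ κ * p') (hP1 : ∀ p ∈ P, 1 ≤ ρ * p)
    (hu : ∀ᶠ a in l, u a ∈ P)
    (hv : ∀ᶠ b in l', 0 < v b ∧ ∀ p ∈ P, p ≤ ρ * v b ∨ v b ≤ ρ * p) :
    limUnder l' (fun b => meanDensity (leftCollar ρ P) (v b)) <
      limUnder l (fun a => meanDensity (leftCollar ρ P) (u a)) := by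
  have hP0 : ∀ p ∈ P, 0 < p := fun p hp =>
    pos_of_mul_pos_right (zero_lt_one.trans_le (hP1 p hp)) hρ0.le
  have hlim := tendsto_limUnder_of_isCompact isCompact_Icc
    (hu.mono fun a ha => meanDensity_mem_Icc (X := leftCollar ρ P) (hP0 _ ha))
  have hlim' := tendsto_limUnder_of_isCompact isCompact_Icc
    (hv.mono fun b hb => meanDensity_mem_Icc (X := leftCollar ρ P) hb.1)
  calc limUnder l' (fun b => meanDensity (leftCollar ρ P) (v b))
      ≤ κ + ρ * (1 - ρ) := le_of_tendsto hlim' <| hv.mono fun b hb =>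
        meanDensity_leftCollar_le hρ0.le hρ hκ0 hb.1 hP hb.2
    _ < 1 - ρ := by linarith
    _ ≤ limUnder l (fun a => meanDensity (leftCollar ρ P) (u a)) :=
        ge_of_tendsto hlim <| hu.mono fun a ha =>
          one_sub_le_meanDensity_leftCollar hρ ha (hP0 _ ha) (hP1 _ ha)

end LeftCollar

section GeometricScale

variable {b : ℝ}

theorem rpow_le_rpow_neg_mul_rpow_iff (hb : 1 < b) {δ s q : ℝ} :
    b ^ s ≤ b ^ (-δ) * b ^ q ↔ s + δ ≤ q := by
  rw [← Real.rpow_add (zero_lt_one.trans hb), Real.rpow_le_rpow_left_iff hb, le_neg_add_iff_add_le,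
    add_comm]

theorem exists_nat_rpow_neg_lt (hb : 1 < b) {ε : ℝ} (hε : 0 < ε) :
    ∃ K : ℕ, b ^ (-(K : ℝ)) < ε := by
  obtain ⟨K, hK⟩ := exists_pow_lt_of_lt_one hε (inv_lt_one_of_one_lt₀ hb)
  exact ⟨K, by rwa [Real.rpow_neg (zero_le_one.trans hb.le), Real.rpow_natCast, ← inv_pow]⟩

theorem exists_limUnder_meanDensity_lt (hb : 1 < b) {β : Type*} {η : Ultrafilter ℕ}
    {l : Ultrafilter β} {t δ : ℝ} {v : β → ℝ} {A : Set ℕ} (hA : A ∈ η) (hδ : 0 < δ)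
    (hAδ : ∀ n ∈ A, δ ≤ n + t) (hsep : ∀ᶠ i in l, ∀ n ∈ A, δ ≤ |(n : ℝ) + t - v i|) :
    ∃ X ⊆ Set.Ici (1 : ℝ), MeasurableSet X ∧
      limUnder l (fun i => meanDensity X (b ^ v i)) <
        limUnder η (fun n : ℕ => meanDensity X (b ^ ((n : ℝ) + t))) := by
  have hb0 : 0 < b := zero_lt_one.trans hb
  have hρ : b ^ (-δ) < 1 := Real.rpow_lt_one_of_one_lt_of_neg hb (neg_lt_zero.2 hδ)
  obtain ⟨K, hK⟩ := exists_nat_rpow_neg_lt hb (pow_pos (sub_pos.2 hρ) 2)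
  obtain ⟨S, hS, hgap⟩ := exists_mem_forall_add_le η K
  let P : Set ℝ := (fun n : ℕ => b ^ ((n : ℝ) + t)) '' (A ∩ S)
  have hP : ∀ p ∈ P, ∀ p' ∈ P, p < p' → p ≤ b ^ (-(K : ℝ)) * p' := by
    rintro _ ⟨n, hn, rfl⟩ _ ⟨m, hm, rfl⟩ hlt
    have hnm : n < m := by simpa [Real.rpow_lt_rpow_left_iff hb] using hlt
    have hnK : (n : ℝ) + K ≤ m := mod_cast hgap n hn.2 m hm.2 hnm
    exact (rpow_le_rpow_neg_mul_rpow_iff hb).2 (by linarith)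
  have hP1 : ∀ p ∈ P, 1 ≤ b ^ (-δ) * p := by
    rintro _ ⟨n, hn, rfl⟩
    simpa using (rpow_le_rpow_neg_mul_rpow_iff hb (s := 0)).2 (by simpa using hAδ n hn.1)
  have hfar : ∀ᶠ i in l, 0 < b ^ v i ∧
      ∀ p ∈ P, p ≤ b ^ (-δ) * b ^ v i ∨ b ^ v i ≤ b ^ (-δ) * p := by
    filter_upwards [hsep] with i hi
    refine ⟨Real.rpow_pos_of_pos hb0 _, ?_⟩
    rintro _ ⟨n, hn, rfl⟩
    simp only [rpow_le_rpow_neg_mul_rpow_iff hb]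
    rcases le_abs.1 (hi n hn.1) with h | h
    · exact .inr (by linarith)
    · exact .inl (by linarith)
  exact ⟨leftCollar (b ^ (-δ)) P, leftCollar_subset_Ici hP1,
    measurableSet_leftCollar ((A ∩ S).to_countable.image _),
    limUnder_meanDensity_leftCollar_lt (by positivity) hρ.le (by positivity) hK hP hP1
      (mem_of_superset (inter_mem hA hS) fun n hn => Set.mem_image_of_mem _ hn) hfar⟩

theorem exists_limUnder_meanDensity_ne (hb : 1 < b) {η η' : Ultrafilter ℕ} {t t' : ℝ}
    (ht : t ∈ Set.Ico (0 : ℝ) 1) (ht' : t' ∈ Set.Ico (0 : ℝ) 1) (hne : ¬(η = η' ∧ t = t')) :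
    ∃ X ⊆ Set.Ici (1 : ℝ), MeasurableSet X ∧
      limUnder η (fun n : ℕ => meanDensity X (b ^ ((n : ℝ) + t))) ≠
        limUnder η' (fun n : ℕ => meanDensity X (b ^ ((n : ℝ) + t'))) := by
  obtain ⟨δ, hδ, A, hA, B, hB, hsep⟩ := exists_separated_translates ht ht' hne
  -- Two nonnegative numbers at distance at least `δ` cannot both be smaller than `δ / 2`.
  have hfar : (∀ n ∈ A, δ / 2 ≤ n + t) ∨ ∀ m ∈ B, δ / 2 ≤ m + t' := by
    by_contra! ⟨⟨n, hn, hnt⟩, m, hm, hmt⟩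
    have hn0 : 0 ≤ n + t := add_nonneg n.cast_nonneg ht.1
    have hm0 : 0 ≤ m + t' := add_nonneg m.cast_nonneg ht'.1
    exact (hsep n hn m hm).not_gt (abs_lt.2 ⟨by linarith, by linarith⟩)
  have hsep' : ∀ n ∈ A, ∀ m ∈ B, δ / 2 ≤ |(n : ℝ) + t - (m + t')| := fun n hn m hm =>
    (half_le_self hδ.le).trans (hsep n hn m hm)
  rcases hfar with hAδ | hBδ
  · obtain ⟨X, hX1, hX, hlt⟩ := exists_limUnder_meanDensity_lt hb (l := η') hA (half_pos hδ) hAδ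
      (mem_of_superset hB fun m hm n hn => hsep' n hn m hm)
    exact ⟨X, hX1, hX, hlt.ne'⟩
  · obtain ⟨X, hX1, hX, hlt⟩ := exists_limUnder_meanDensity_lt hb (l := η) hB (half_pos hδ) hBδ
      (mem_of_superset hA fun n hn m hm => abs_sub_comm ((n : ℝ) + t) _ ▸ hsep' n hn m hm)
    exact ⟨X, hX1, hX, hlt.ne⟩

end GeometricScale

theorem stmt1_general {b : ℝ} (hb : 1 < b) (η η' : Ultrafilter ℕ)
    (t t' : ℝ) (ht : t ∈ Set.Ico (0 : ℝ) 1) (ht' : t' ∈ Set.Ico (0 : ℝ) 1)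
    (hne : ¬(η = η' ∧ t = t')) :
    ∃ X : Set ℝ, X ⊆ Set.Ici (1 : ℝ) ∧ MeasurableSet X ∧
      limUnder (η : Filter ℕ)
          (fun n : ℕ => b ^ (-((n : ℝ) + t)) *
            ∫ y in Set.Icc (1 : ℝ) (b ^ ((n : ℝ) + t)), X.indicator (fun _ => (1 : ℝ)) y) ≠
        limUnder (η' : Filter ℕ)
          (fun n : ℕ => b ^ (-((n : ℝ) + t')) *
            ∫ y in Set.Icc (1 : ℝ) (b ^ ((n : ℝ) + t')), X.indicator (fun _ => (1 : ℝ)) y) := by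
  obtain ⟨X, hX1, hX, hlim⟩ := exists_limUnder_meanDensity_ne hb ht ht' hne
  refine ⟨X, hX1, hX, ?_⟩
  simpa only [Real.rpow_neg (zero_le_one.trans hb.le), inv_mul_setIntegral_indicator_one hX]
    using hlim

/-- If `(η,t) ≠ (η′,t′)` (with `η, η′` free ultrafilters on `ℕ` and
`t, t′ ∈ [0,1)`), there is a Borel set `X ⊆ [1,∞)` whose indicator function separates
the functionals `ψ_{(η,t)}` and `ψ_{(η′,t′)}` on `L^∞[1,∞)`, where
`ψ_{(η,t)}(f) = η-lim_n 2^{-(n+t)} ∫_1^{2^{n+t}} f(y) dy`. -/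
theorem stmt1 (η η' : Ultrafilter ℕ)
    (hη : (η : Filter ℕ) ≤ Filter.cofinite) (hη' : (η' : Filter ℕ) ≤ Filter.cofinite)
    (t t' : ℝ) (ht : t ∈ Set.Ico (0:ℝ) 1) (ht' : t' ∈ Set.Ico (0:ℝ) 1)
    (hne : ¬(η = η' ∧ t = t')) :
    ∃ X : Set ℝ, X ⊆ Set.Ici (1:ℝ) ∧ MeasurableSet X ∧
      limUnder (η : Filter ℕ)
          (fun n : ℕ => (2:ℝ) ^ (-((n : ℝ) + t)) *
            ∫ y in Set.Icc (1:ℝ) ((2:ℝ) ^ ((n : ℝ) + t)), X.indicator (fun _ => (1:ℝ)) y) ≠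
        limUnder (η' : Filter ℕ)
          (fun n : ℕ => (2:ℝ) ^ (-((n : ℝ) + t')) *
            ∫ y in Set.Icc (1:ℝ) ((2:ℝ) ^ ((n : ℝ) + t')), X.indicator (fun _ => (1:ℝ)) y) := by
  exact stmt1_general one_lt_two η η' t t' ht ht' hne
end

section
/- Define V : ℳ → 𝒞 by (Vψ)(f) = ψ(f̃), where for f ∈ ℓ∞ the function f̃ ∈ L^∞[1,∞) is given by f̃(x) = f(⌊x⌋). Then V is a well-defined affine bijection from ℳ onto 𝒞, and it is a homeomorphism with respect to the weak* topologies. -/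
open Filter MeasureTheory Topology

noncomputable section

/-- Lebesgue measure restricted to `[1,∞)`. -/
abbrev muIci : Measure ℝ := volume.restrict (Set.Ici (1:ℝ))

/-- `L^∞[1,∞)`. -/
abbrev Linf : Type := Lp ℝ ⊤ muIci

/-- `ℓ∞`, the bounded (continuous, for the discrete topology) functions `ℕ → ℝ`. -/
abbrev linf : Type := BoundedContinuousFunction ℕ ℝ

/-- `M̄(f) = limsup_{x→∞} (1/x) ∫_1^x f(t) dt`. -/
def Mbar (f : Linf) : ℝ :=
  limsup (fun x : ℝ => (1 / x) * ∫ t in Set.Icc (1:ℝ) x, f t) atTop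

/-- `C̄(f) = limsup_{n→∞} (1/n) ∑_{i=1}^n f(i)`. -/
def Cbar (f : linf) : ℝ :=
  limsup (fun n : ℕ => (1 / (n : ℝ)) * ∑ i ∈ Finset.Icc 1 n, f i) atTop

/-- The class `ℳ`, as a subset of the weak-* dual of `L^∞[1,∞)`. -/
def Mcl : Set (WeakDual ℝ Linf) := {ψ | ∀ f : Linf, ψ f ≤ Mbar f}

/-- The class `𝒞`, as a subset of the weak-* dual of `ℓ∞`. -/
def Ccl : Set (WeakDual ℝ linf) := {φ | ∀ f : linf, φ f ≤ Cbar f}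

/-!
`V` is the transpose of the operator `S : ℓ∞ → L^∞[1,∞)`, `f ↦ f̃`. Let `A : L^∞[1,∞) → ℓ∞` send
`g` to the sequence of its integrals over `[n, n + 1]`. Since `∑_{i ≤ n} (A g)(i) = ∫_1^{n+1} g`,
the Cesàro means of `A g` and the continuous means of `g` differ by `O(1/x)`, so `C̄ ∘ A = M̄`.
Moreover `A (S f)` agrees with `f` on `n ≥ 1`, so `C̄` vanishes at `f - A (S f)` and `M̄` at
`g - S (A g)`. A functional dominated by `C̄` or `M̄` therefore does not see these differences,
which makes the transpose of `A` a weak-* continuous inverse of `V`.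
-/

section Transpose

variable {𝕜 E F : Type*} [CommSemiring 𝕜] [TopologicalSpace 𝕜] [ContinuousAdd 𝕜]
  [ContinuousConstSMul 𝕜 𝕜] [AddCommMonoid E] [Module 𝕜 E] [TopologicalSpace E]
  [AddCommMonoid F] [Module 𝕜 F] [TopologicalSpace F]

/-- The transpose `ψ ↦ ψ ∘ T` of a continuous linear map, continuous for the weak-* topologies. -/
def weakDualMap (T : E →L[𝕜] F) : WeakDual 𝕜 F →L[𝕜] WeakDual 𝕜 E where
  toFun ψ := StrongDual.toWeakDual ((WeakDual.toStrongDual ψ).comp T)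
  map_add' _ _ := rfl
  map_smul' _ _ := rfl
  cont := WeakDual.continuous_of_continuous_eval fun x => WeakDual.eval_continuous (T x)

lemma weakDualMap_apply (T : E →L[𝕜] F) (ψ : WeakDual 𝕜 F) (x : E) :
    weakDualMap T ψ x = ψ (T x) :=
  rfl

end Transpose

section DominatedFunctionals

variable {E F : Type*} [AddCommGroup E] [Module ℝ E] [TopologicalSpace E]
  [AddCommGroup F] [Module ℝ F] [TopologicalSpace F]

/-- The continuous linear functionals dominated by `p`; for `p = Mbar` and `p = Cbar` these are the
classes `ℳ` and `𝒞`. -/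
def dominatedBy (p : E → ℝ) : Set (WeakDual ℝ E) :=
  {φ | ∀ x, φ x ≤ p x}

lemma weakDualMap_mem_dominatedBy {p : E → ℝ} {q : F → ℝ} {T : E →L[ℝ] F}
    (hT : ∀ x, q (T x) ≤ p x) {ψ : WeakDual ℝ F} (hψ : ψ ∈ dominatedBy q) :
    weakDualMap T ψ ∈ dominatedBy p :=
  fun x => (hψ (T x)).trans (hT x)

lemma apply_eq_of_mem_dominatedBy {p : E → ℝ} {P : E →L[ℝ] E} (hP : ∀ x, p (x - P x) ≤ 0)
    {φ : WeakDual ℝ E} (hφ : φ ∈ dominatedBy p) (x : E) : φ (P x) = φ x := by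
  have apply_sub_nonpos (y : E) : φ y - φ (P y) ≤ 0 := by
    simpa only [map_sub] using (hφ (y - P y)).trans (hP y)
  have h := apply_sub_nonpos x
  have h_neg := apply_sub_nonpos (-x)
  simp only [map_neg] at h_neg
  linarith

/-- Transposition along `S` as a homeomorphism between classes of dominated functionals, when `A` is
an inverse of `S` up to vectors on which the dominating functions are nonpositive. -/
def dominatedHomeomorph {p : E → ℝ} {q : F → ℝ} (S : E →L[ℝ] F) (A : F →L[ℝ] E)
    (hS : ∀ x, q (S x) ≤ p x) (hA : ∀ y, p (A y) ≤ q y)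
    (hAS : ∀ x, p (x - A (S x)) ≤ 0) (hSA : ∀ y, q (y - S (A y)) ≤ 0) :
    dominatedBy q ≃ₜ dominatedBy p where
  toFun ψ := ⟨weakDualMap S ψ, weakDualMap_mem_dominatedBy hS ψ.2⟩
  invFun φ := ⟨weakDualMap A φ, weakDualMap_mem_dominatedBy hA φ.2⟩
  left_inv ψ := Subtype.ext <| DFunLike.ext _ _ fun y =>
    apply_eq_of_mem_dominatedBy (P := S.comp A) hSA ψ.2 y
  right_inv φ := Subtype.ext <| DFunLike.ext _ _ fun x =>
    apply_eq_of_mem_dominatedBy (P := A.comp S) hAS φ.2 x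
  continuous_toFun := ((weakDualMap S).continuous.comp continuous_subtype_val).subtype_mk _
  continuous_invFun := ((weakDualMap A).continuous.comp continuous_subtype_val).subtype_mk _

end DominatedFunctionals

section Limsup

lemma limsup_eq_of_tendsto_sub_zero {α : Type*} {l : Filter α} [l.NeBot] {u v : α → ℝ}
    (hv : IsBoundedUnder (· ≤ ·) l fun a => |v a|) (h : Tendsto (u - v) l (𝓝 0)) :
    limsup u l = limsup v l := by
  obtain ⟨hv_le, hv_ge⟩ := isBoundedUnder_le_abs.1 hv
  have hu : v + (u - v) = u := add_sub_cancel v u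
  apply le_antisymm
  · calc limsup u l ≤ limsup v l + limsup (u - v) l := by
          simpa only [hu] using limsup_add_le hv_ge hv_le
            h.isBoundedUnder_ge.isCoboundedUnder_le h.isBoundedUnder_le
      _ = limsup v l := by rw [h.limsup_eq, add_zero]
  · calc limsup v l = limsup v l + liminf (u - v) l := by rw [h.liminf_eq, add_zero]
      _ ≤ limsup u l := by
          simpa only [hu] using le_limsup_add hv_le hv_ge.isCoboundedUnder_le
            h.isBoundedUnder_le h.isBoundedUnder_ge

lemma map_natFloor_atTop {R : Type*} [Semiring R] [LinearOrder R] [IsStrictOrderedRing R]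
    [FloorSemiring R] : map (fun x : R => ⌊x⌋₊) atTop = atTop := by
  have tendsto_cast : Tendsto (Nat.cast : ℕ → R) atTop atTop :=
    Nat.mono_cast.tendsto_atTop_atTop fun x => ⟨⌈x⌉₊, Nat.le_ceil x⟩
  refine le_antisymm tendsto_nat_floor_atTop ?_
  calc (atTop : Filter ℕ) = map (fun x : R => ⌊x⌋₊) (map Nat.cast atTop) := by
        simp [map_map, Function.comp_def]
    _ ≤ map (fun x : R => ⌊x⌋₊) atTop := map_mono tendsto_cast

lemma tendsto_mean_sub_mean_natFloor {u : ℝ → ℝ} {v : ℕ → ℝ} {C D : ℝ}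
    (huv : ∀ᶠ x in atTop, |u x - v ⌊x⌋₊| ≤ C) (hv : ∀ n : ℕ, |1 / (n : ℝ) * v n| ≤ D) :
    Tendsto (fun x => 1 / x * u x - 1 / (⌊x⌋₊ : ℝ) * v ⌊x⌋₊) atTop (𝓝 0) := by
  have numerators : Tendsto (fun x => (u x - v ⌊x⌋₊) * x⁻¹) atTop (𝓝 0) :=
    bdd_le_mul_tendsto_zero' C huv tendsto_inv_atTop_zero
  have denominators :
      Tendsto (fun x : ℝ => 1 / (⌊x⌋₊ : ℝ) * v ⌊x⌋₊ * (⌊x⌋₊ / x - 1)) atTop (𝓝 0) :=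
    bdd_le_mul_tendsto_zero' D (.of_forall fun x => hv ⌊x⌋₊)
      (by simpa using (tendsto_nat_floor_div_atTop (R := ℝ)).sub_const 1)
  have h := numerators.add denominators
  rw [add_zero] at h
  refine h.congr' ?_
  filter_upwards [eventually_ge_atTop 1] with x hx
  have floor_ne_zero : (⌊x⌋₊ : ℝ) ≠ 0 := by
    exact_mod_cast (Nat.floor_pos.2 hx).ne'
  field_simp
  ring

lemma limsup_mean_eq_limsup_mean_nat {u : ℝ → ℝ} {v : ℕ → ℝ} {C D : ℝ}
    (huv : ∀ᶠ x in atTop, |u x - v ⌊x⌋₊| ≤ C) (hv : ∀ n : ℕ, |1 / (n : ℝ) * v n| ≤ D) :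
    limsup (fun x => 1 / x * u x) atTop = limsup (fun n : ℕ => 1 / (n : ℝ) * v n) atTop := by
  rw [← map_natFloor_atTop (R := ℝ), ← limsup_comp]
  exact limsup_eq_of_tendsto_sub_zero (isBoundedUnder_of ⟨D, fun x => hv ⌊x⌋₊⟩)
    (tendsto_mean_sub_mean_natFloor huv hv)

end Limsup

section LpTop

variable {α E : Type*} [NormedAddCommGroup E]

lemma ae_norm_le_norm_of_Lp_top {m : MeasurableSpace α} {μ : Measure α} (g : Lp E ⊤ μ) :
    ∀ᵐ t ∂μ, ‖g t‖ ≤ ‖g‖ := by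
  filter_upwards [ae_le_eLpNormEssSup (f := g) (μ := μ)] with t ht
  rwa [← eLpNorm_exponent_top, ← Lp.enorm_def, enorm_le_iff_norm_le] at ht

variable {μ : Measure ℝ} [IsLocallyFiniteMeasure μ]

lemma intervalIntegrable_Lp_top (g : Lp E ⊤ μ) (a b : ℝ) : IntervalIntegrable g μ a b :=
  (((Lp.memLp g).locallyIntegrable le_top).integrableOn_isCompact
    isCompact_uIcc).intervalIntegrable

lemma norm_intervalIntegral_Lp_top_le [NormedSpace ℝ E] (g : Lp E ⊤ μ) (a b : ℝ) :
    ‖∫ t in a..b, g t ∂μ‖ ≤ ‖g‖ * μ.real (Set.uIoc a b) := by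
  rw [intervalIntegral.norm_integral_eq_norm_integral_uIoc]
  exact norm_setIntegral_le_of_norm_le_const_ae measure_Ioc_lt_top
    (ae_restrict_of_ae (ae_norm_le_norm_of_Lp_top g))

end LpTop

section Pullback

variable {Ω : Type*} [MeasurableSpace Ω] (μ : Measure Ω) {π : Ω → ℕ}

lemma memLp_top_comp_nat (hπ : Measurable π) (f : linf) : MemLp (fun x => f (π x)) ⊤ μ :=
  memLp_top_of_bound ((measurable_of_countable f).comp hπ).aestronglyMeasurable ‖f‖
    (.of_forall fun x => f.norm_coe_le_norm (π x))

lemma norm_toLp_comp_nat_le (hπ : Measurable π) (f : linf) :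
    ‖(memLp_top_comp_nat μ hπ f).toLp‖ ≤ ‖f‖ := by
  rw [Lp.norm_toLp, eLpNorm_exponent_top]
  exact ENNReal.toReal_le_of_le_ofReal (norm_nonneg f)
    (eLpNormEssSup_le_of_ae_bound (.of_forall fun x => f.norm_coe_le_norm (π x)))

/-- The map `f ↦ f ∘ π` from `ℓ∞` to `L^∞(μ)`. -/
def pullbackLpTop (hπ : Measurable π) : linf →L[ℝ] Lp ℝ ⊤ μ :=
  LinearMap.mkContinuous
    { toFun f := (memLp_top_comp_nat μ hπ f).toLp _
      map_add' _ _ := rfl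
      map_smul' _ _ := rfl } 1 fun f =>
    (norm_toLp_comp_nat_le μ hπ f).trans_eq (one_mul ‖f‖).symm

lemma coeFn_pullbackLpTop (hπ : Measurable π) (f : linf) :
    pullbackLpTop μ hπ f =ᵐ[μ] fun x => f (π x) :=
  (memLp_top_comp_nat μ hπ f).coeFn_toLp

end Pullback

section StepAndAverage

/-- The map `f ↦ f̃` from `ℓ∞` to `L^∞[1,∞)`, where `f̃(x) = f(⌊x⌋)`. -/
def floorStep : linf →L[ℝ] Linf :=
  pullbackLpTop muIci Nat.measurable_floor

lemma coeFn_floorStep (f : linf) : floorStep f =ᵐ[muIci] fun x => f ⌊x⌋₊ :=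
  coeFn_pullbackLpTop muIci Nat.measurable_floor f

lemma muIci_real_uIoc_le (a b : ℝ) : muIci.real (Set.uIoc a b) ≤ |b - a| := by
  calc muIci.real (Set.uIoc a b) ≤ volume.real (Set.uIoc a b) :=
        ENNReal.toReal_mono measure_Ioc_lt_top.ne (Measure.restrict_apply_le _ _)
    _ = |b - a| := by simp [Set.uIoc, max_sub_min_eq_abs]

lemma abs_intervalIntegral_muIci_le (g : Linf) (a b : ℝ) :
    |∫ t in a..b, g t ∂muIci| ≤ ‖g‖ * |b - a| :=
  (norm_intervalIntegral_Lp_top_le g a b).trans <|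
    mul_le_mul_of_nonneg_left (muIci_real_uIoc_le a b) (norm_nonneg g)

lemma intervalIntegral_muIci {a b : ℝ} (ha : 1 ≤ a) (hab : a ≤ b) (h : ℝ → ℝ) :
    ∫ t in a..b, h t ∂muIci = ∫ t in Set.Icc a b, h t := by
  have Ioc_subset : Set.Ioc a b ⊆ Set.Ici 1 := fun t ht => ha.trans ht.1.le
  rw [intervalIntegral.integral_of_le hab, integral_Icc_eq_integral_Ioc,
    Measure.restrict_restrict_of_subset Ioc_subset]

lemma abs_intervalIntegral_cell_le (g : Linf) (n : ℕ) :
    |∫ t in (n : ℝ)..(n + 1), g t ∂muIci| ≤ ‖g‖ := by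
  simpa using abs_intervalIntegral_muIci_le g n (n + 1)

/-- The sequence of integrals of `g` over the intervals `[n, n + 1]`. Integrating against `muIci`
makes the term at `n = 0` vanish instead of depending on values of `g` outside `[1,∞)`. -/
def cellAverage : Linf →L[ℝ] linf :=
  LinearMap.mkContinuous
    { toFun g := BoundedContinuousFunction.ofNormedAddCommGroupDiscrete
        (fun n : ℕ => ∫ t in (n : ℝ)..(n + 1), g t ∂muIci) ‖g‖
        (abs_intervalIntegral_cell_le g)
      map_add' g h := by
        ext n
        exact (intervalIntegral.integral_congr_ae_restrict
          (ae_restrict_of_ae (Lp.coeFn_add g h))).trans <|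
          intervalIntegral.integral_add (intervalIntegrable_Lp_top g _ _)
            (intervalIntegrable_Lp_top h _ _)
      map_smul' c g := by
        ext n
        exact (intervalIntegral.integral_congr_ae_restrict
          (ae_restrict_of_ae (Lp.coeFn_smul c g))).trans <|
          intervalIntegral.integral_smul c _ } 1 fun g => by
    rw [one_mul]
    exact (BoundedContinuousFunction.norm_le (norm_nonneg g)).2 (abs_intervalIntegral_cell_le g)

lemma cellAverage_apply (g : Linf) (n : ℕ) :
    cellAverage g n = ∫ t in (n : ℝ)..(n + 1), g t ∂muIci :=
  rfl

lemma cellAverage_floorStep (f : linf) {n : ℕ} (hn : 1 ≤ n) :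
    cellAverage (floorStep f) n = f n := by
  have floor_eq : Set.EqOn (fun t : ℝ => f ⌊t⌋₊) (fun _ => f n) (Set.Ioo (n : ℝ) (n + 1)) :=
    fun t ht => congrArg f (Nat.floor_eq_on_Ico n t (Set.Ioo_subset_Ico_self ht))
  calc cellAverage (floorStep f) n = ∫ t in (n : ℝ)..(n + 1), f ⌊t⌋₊ ∂muIci :=
        intervalIntegral.integral_congr_ae_restrict (ae_restrict_of_ae (coeFn_floorStep f))
    _ = ∫ _ in (n : ℝ)..(n + 1), f n ∂muIci :=
        intervalIntegral.integral_congr_Ioo_of_le (by simp) floor_eq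
    _ = f n := by
        rw [intervalIntegral_muIci (by exact_mod_cast hn) (by simp)]
        simp

lemma sum_cellAverage (g : Linf) (n : ℕ) :
    ∑ i ∈ Finset.Icc 1 n, cellAverage g i = ∫ t in (1 : ℝ)..(n + 1), g t ∂muIci := by
  have telescope := intervalIntegral.sum_integral_adjacent_intervals_Ico
    (μ := muIci) (f := g) (a := fun k : ℕ => (k : ℝ)) (Nat.le_add_left 1 n)
    fun k _ => intervalIntegrable_Lp_top g _ _
  simpa [cellAverage_apply, Finset.Ico_add_one_right_eq_Icc] using telescope

end StepAndAverage

section Means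

lemma abs_cesaroMean_le_norm (f : linf) (n : ℕ) :
    |1 / (n : ℝ) * ∑ i ∈ Finset.Icc 1 n, f i| ≤ ‖f‖ := by
  have sum_le : |∑ i ∈ Finset.Icc 1 n, f i| ≤ n * ‖f‖ := by
    simpa using norm_sum_le_of_le (Finset.Icc 1 n) fun i _ => f.norm_coe_le_norm i
  rw [one_div_mul_eq_div, abs_div, Nat.abs_cast]
  exact div_le_of_le_mul₀ n.cast_nonneg (norm_nonneg f) (by linarith)

lemma Cbar_congr {f g : linf} (h : ∀ n, 1 ≤ n → f n = g n) : Cbar f = Cbar g := by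
  unfold Cbar
  congr! 4 with n i hi
  exact h i (Finset.mem_Icc.1 hi).1

lemma Cbar_zero : Cbar 0 = 0 := by
  simp [Cbar]

lemma abs_integral_sub_sum_cellAverage_le (g : Linf) {x : ℝ} (hx : 1 ≤ x) :
    |(∫ t in Set.Icc 1 x, g t) - ∑ i ∈ Finset.Icc 1 ⌊x⌋₊, cellAverage g i| ≤ ‖g‖ := by
  rw [sum_cellAverage, ← intervalIntegral_muIci le_rfl hx,
    intervalIntegral.integral_interval_sub_left (intervalIntegrable_Lp_top g _ _)
      (intervalIntegrable_Lp_top g _ _)]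
  have length_le : |x - (⌊x⌋₊ + 1)| ≤ 1 := by
    have := Nat.floor_le (zero_le_one.trans hx)
    have := Nat.lt_floor_add_one x
    rw [abs_le]
    constructor <;> linarith
  exact (abs_intervalIntegral_muIci_le g _ _).trans
    (mul_le_of_le_one_right (norm_nonneg g) length_le)

lemma Cbar_cellAverage (g : Linf) : Cbar (cellAverage g) = Mbar g :=
  (limsup_mean_eq_limsup_mean_nat
    ((eventually_ge_atTop 1).mono fun _ => abs_integral_sub_sum_cellAverage_le g)
    (abs_cesaroMean_le_norm (cellAverage g))).symm

lemma Mbar_floorStep (f : linf) : Mbar (floorStep f) = Cbar f := by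
  rw [← Cbar_cellAverage]
  exact Cbar_congr fun _ => cellAverage_floorStep f

lemma Cbar_sub_cellAverage_floorStep (f : linf) : Cbar (f - cellAverage (floorStep f)) = 0 := by
  rw [← Cbar_zero]
  exact Cbar_congr fun n hn => by simp [cellAverage_floorStep f hn]

lemma Mbar_sub_floorStep_cellAverage (g : Linf) : Mbar (g - floorStep (cellAverage g)) = 0 := by
  rw [← Cbar_cellAverage, map_sub, Cbar_sub_cellAverage_floorStep]

end Means

/-- The map `V`, with inverse `φ ↦ φ ∘ cellAverage`. -/
def mclHomeomorphCcl : Mcl ≃ₜ Ccl :=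
  dominatedHomeomorph floorStep cellAverage
    (fun f => (Mbar_floorStep f).le) (fun g => (Cbar_cellAverage g).le)
    (fun f => (Cbar_sub_cellAverage_floorStep f).le)
    (fun g => (Mbar_sub_floorStep_cellAverage g).le)

lemma coe_mclHomeomorphCcl_apply (ψ : Mcl) :
    (mclHomeomorphCcl ψ : WeakDual ℝ linf) = weakDualMap floorStep ψ :=
  rfl

/-- The map `V : ℳ → 𝒞`, `(Vψ)(f) = ψ(f̃)` with `f̃(x) = f(⌊x⌋)`, is a
well-defined affine bijection of `ℳ` onto `𝒞` and a homeomorphism for the weak-*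
topologies. -/
theorem stmt3 :
    ∃ V : Mcl ≃ₜ Ccl,
      (∀ (ψ : Mcl) (f : linf) (h : Linf),
          (⇑h : ℝ → ℝ) =ᵐ[muIci] (fun x : ℝ => f ⌊x⌋₊) →
          (V ψ : WeakDual ℝ linf) f = (ψ : WeakDual ℝ Linf) h) ∧
      (∀ a b : ℝ, 0 ≤ a → 0 ≤ b → a + b = 1 →
        ∀ ψ₁ ψ₂ ψ₃ : Mcl, (ψ₃ : WeakDual ℝ Linf) = a • (ψ₁ : WeakDual ℝ Linf) + b • ψ₂ →
          (V ψ₃ : WeakDual ℝ linf) = a • (V ψ₁ : WeakDual ℝ linf) + b • (V ψ₂ : WeakDual ℝ linf)) := by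
  refine ⟨mclHomeomorphCcl, fun ψ f h hh => ?_, fun a b _ _ _ ψ₁ ψ₂ ψ₃ h => ?_⟩
  · have h_eq : h = floorStep f := Lp.ext (hh.trans (coeFn_floorStep f).symm)
    rw [coe_mclHomeomorphCcl_apply, weakDualMap_apply, h_eq]
  · simp only [coe_mclHomeomorphCcl_apply, h, map_add, map_smul]
end
end

section
/- Let f ∈ L^∞[1,∞) and define g : ℕ → ℝ by g(n) = ∫_n^{n+1} f(t) dt. Then g is bounded and ψ(f) = ψ(g̃) for every ψ ∈ ℳ, where g̃ ∈ L^∞[1,∞) is given by g̃(x) = g(⌊x⌋). -/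
open Filter MeasureTheory Topology

noncomputable section

/-!
If `f` and `h` have the same integral over every unit interval `[n, n + 1]` with `n ≥ 1`, then all
but the last, incomplete unit interval cancels in `∫_1^x (f - h)`, which is therefore at most
`‖f - h‖_∞` in absolute value. Hence `M̄(f - h) = M̄(h - f) = 0`, and `ψ ≤ M̄` forces `ψ f = ψ h`.
The step function `g̃` has the same unit integrals as `f`.
-/

open Set Asymptotics
open scoped Interval

section UnitIntegral

variable {E : Type*} [NormedAddCommGroup E] {u v : ℝ → E} {s : Set ℝ} {a b : ℝ}

theorem uIoc_subset_Ici {α : Type*} [LinearOrder α] {a b c : α} (hb : a ≤ b) (hc : a ≤ c) :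
    Ι b c ⊆ Ici a :=
  fun _ ht => (le_min hb hc).trans ht.1.le

theorem intervalIntegrable_of_memLp_restrict {μ : Measure ℝ} [IsLocallyFiniteMeasure μ]
    {p : ENNReal} (hp : 1 ≤ p) (hu : MemLp u p (μ.restrict s)) (hab : Ι a b ⊆ s) :
    IntervalIntegrable u μ a b := by
  have : IsFiniteMeasure (μ.restrict (Ι a b)) := isFiniteMeasure_restrict.2 measure_Ioc_lt_top.ne
  exact intervalIntegrable_iff.2
    ((hu.mono_measure (Measure.restrict_mono hab le_rfl)).integrable hp)

theorem memLp_top_comp_natFloor {g : ℕ → E} {C : ℝ} (hg : ∀ n, ‖g n‖ ≤ C) (μ : Measure ℝ) :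
    MemLp (fun x : ℝ => g ⌊x⌋₊) ⊤ μ :=
  memLp_top_of_bound
    (StronglyMeasurable.of_discrete.comp_measurable Nat.measurable_floor).aestronglyMeasurable
    C (.of_forall fun _ => hg _)

variable [NormedSpace ℝ E]

theorem norm_intervalIntegral_le_lpNorm_top (hu : MemLp u ⊤ (volume.restrict s))
    (hab : Ι a b ⊆ s) :
    ‖∫ t in a..b, u t‖ ≤ lpNorm u ⊤ (volume.restrict s) * |b - a| :=
  intervalIntegral.norm_integral_le_of_norm_le_const_ae <| ae_imp_of_ae_restrict <|
    ae_restrict_of_ae_restrict_of_subset hab (ae_le_lpNorm_exponent_top hu)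

/-- The integral `∫_n^{n+1} u` over the `n`-th unit interval. For `u = f` this is the sequence `g`
of the theorem, and `g̃ x = unitIntegral f ⌊x⌋₊`. -/
def unitIntegral (u : ℝ → E) (n : ℕ) : E := ∫ t in (n : ℝ)..((n : ℝ) + 1), u t

theorem unitIntegral_congr_ae {n : ℕ} (huv : u =ᵐ[volume.restrict (Ici a)] v) (hn : a ≤ n) :
    unitIntegral u n = unitIntegral v n :=
  intervalIntegral.integral_congr_ae_restrict <|
    ae_restrict_of_ae_restrict_of_subset (uIoc_subset_Ici hn (by linarith)) huv

theorem unitIntegral_sub {n : ℕ} (hu : IntervalIntegrable u volume n (n + 1))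
    (hv : IntervalIntegrable v volume n (n + 1)) :
    unitIntegral (u - v) n = unitIntegral u n - unitIntegral v n :=
  intervalIntegral.integral_sub hu hv

theorem unitIntegral_comp_natFloor [CompleteSpace E] (g : ℕ → E) (n : ℕ) :
    unitIntegral (fun t => g ⌊t⌋₊) n = g n :=
  calc unitIntegral (fun t => g ⌊t⌋₊) n = ∫ _ in (n : ℝ)..((n : ℝ) + 1), g n :=
        intervalIntegral.integral_congr_Ioo_of_le (by linarith) fun t ht => by
          simp only [Nat.floor_eq_on_Ico n t (Ioo_subset_Ico_self ht)]
    _ = g n := by simp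

theorem norm_unitIntegral_le_lpNorm_top {n : ℕ} (hu : MemLp u ⊤ (volume.restrict (Ici a)))
    (hn : a ≤ n) : ‖unitIntegral u n‖ ≤ lpNorm u ⊤ (volume.restrict (Ici a)) := by
  simpa [unitIntegral] using
    norm_intervalIntegral_le_lpNorm_top hu (uIoc_subset_Ici hn (by linarith : a ≤ (n : ℝ) + 1))

theorem exists_norm_unitIntegral_le (hu : MemLp u ⊤ (volume.restrict (Ici a))) :
    ∃ C, ∀ n, ‖unitIntegral u n‖ ≤ C := by
  -- Only finitely many unit intervals start left of `a`, where nothing is known about `u`.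
  have hbdd : IsBoundedUnder (· ≤ ·) atTop fun n => ‖unitIntegral u n‖ :=
    isBoundedUnder_of_eventually_le <|
      (eventually_ge_atTop ⌈a⌉₊).mono fun n hn =>
        norm_unitIntegral_le_lpNorm_top hu (Nat.ceil_le.1 hn)
  obtain ⟨C, hC⟩ := hbdd.bddAbove_range
  exact ⟨C, fun n => hC (mem_range_self n)⟩

theorem intervalIntegral_eq_sum_unitIntegral_add {m : ℕ} {x : ℝ} (hmx : m ≤ x)
    (hu : IntervalIntegrable u volume m x) :
    ∫ t in (m : ℝ)..x, u t =
      ∑ k ∈ Finset.Ico m ⌊x⌋₊, unitIntegral u k + ∫ t in (⌊x⌋₊ : ℝ)..x, u t := by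
  have hx : (0 : ℝ) ≤ x := m.cast_nonneg.trans hmx
  have hm : m ≤ ⌊x⌋₊ := Nat.le_floor hmx
  have hfloor : (⌊x⌋₊ : ℝ) ≤ x := Nat.floor_le hx
  have hint {c d : ℝ} (hc : m ≤ c) (hcd : c ≤ d) (hd : d ≤ x) : IntervalIntegrable u volume c d :=
    hu.mono_set (by
      rw [uIcc_of_le hcd, uIcc_of_le hmx]
      exact Icc_subset_Icc hc hd)
  have hsum : ∑ k ∈ Finset.Ico m ⌊x⌋₊, unitIntegral u k = ∫ t in (m : ℝ)..⌊x⌋₊, u t := by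
    rw [← intervalIntegral.sum_integral_adjacent_intervals_Ico (a := fun k : ℕ => (k : ℝ)) hm]
    · simp only [unitIntegral, Nat.cast_add_one]
    · intro k hk
      exact hint (Nat.cast_le.2 hk.1) (Nat.cast_le.2 k.le_succ)
        ((Nat.cast_le.2 (Nat.succ_le_of_lt hk.2)).trans hfloor)
  rw [hsum, intervalIntegral.integral_add_adjacent_intervals
    (hint le_rfl (Nat.cast_le.2 hm) hfloor) (hint (Nat.cast_le.2 hm) hfloor le_rfl)]

theorem norm_intervalIntegral_le_of_unitIntegral_eq_zero {m : ℕ} {x : ℝ}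
    (hu : MemLp u ⊤ (volume.restrict (Ici (m : ℝ)))) (h0 : ∀ n, m ≤ n → unitIntegral u n = 0)
    (hmx : m ≤ x) :
    ‖∫ t in (m : ℝ)..x, u t‖ ≤ lpNorm u ⊤ (volume.restrict (Ici (m : ℝ))) := by
  have hm : (m : ℝ) ≤ ⌊x⌋₊ := Nat.cast_le.2 (Nat.le_floor hmx)
  have hlast : |x - ⌊x⌋₊| ≤ 1 := by
    rw [abs_of_nonneg (sub_nonneg.2 (Nat.floor_le (m.cast_nonneg.trans hmx)))]
    linarith [Nat.lt_floor_add_one x]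
  have hsum : ∑ k ∈ Finset.Ico m ⌊x⌋₊, unitIntegral u k = 0 :=
    Finset.sum_eq_zero fun k hk => h0 k (Finset.mem_Ico.1 hk).1
  rw [intervalIntegral_eq_sum_unitIntegral_add hmx
    (intervalIntegrable_of_memLp_restrict le_top hu (uIoc_subset_Ici le_rfl hmx)), hsum, zero_add]
  exact (norm_intervalIntegral_le_lpNorm_top hu (uIoc_subset_Ici hm hmx)).trans
    (mul_le_of_le_one_right lpNorm_nonneg hlast)

end UnitIntegral

section DominatedFunctional

variable {ψ : Linf →ₗ[ℝ] ℝ} {u v : Linf}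

theorem Mbar_eq_zero_of_isLittleO
    (hu : (fun x : ℝ => ∫ t in Icc (1 : ℝ) x, u t) =o[atTop] fun x => x) : Mbar u = 0 :=
  Tendsto.limsup_eq <| by simpa only [one_div_mul_eq_div] using hu.tendsto_div_nhds_zero

theorem map_eq_zero_of_isLittleO (hψ : ∀ w, ψ w ≤ Mbar w)
    (hu : (fun x : ℝ => ∫ t in Icc (1 : ℝ) x, u t) =o[atTop] fun x => x) : ψ u = 0 := by
  have hneg : (fun x : ℝ => ∫ t in Icc (1 : ℝ) x, (-u : Linf) t) =o[atTop] fun x => x := by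
    refine hu.neg_left.congr_left fun x => ?_
    have hcoe : ⇑(-u) =ᵐ[volume.restrict (Icc 1 x)] -⇑u :=
      ae_restrict_of_ae_restrict_of_subset Icc_subset_Ici_self (Lp.coeFn_neg u)
    rw [integral_congr_ae hcoe]
    exact (integral_neg _).symm
  have hle : ψ u ≤ 0 := (hψ u).trans_eq (Mbar_eq_zero_of_isLittleO hu)
  have hge : ψ (-u) ≤ 0 := (hψ (-u)).trans_eq (Mbar_eq_zero_of_isLittleO hneg)
  rw [map_neg, neg_nonpos] at hge
  exact le_antisymm hle hge

theorem isLittleO_setIntegral_of_unitIntegral_eq_zero (h0 : ∀ n, 1 ≤ n → unitIntegral u n = 0) :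
    (fun x : ℝ => ∫ t in Icc (1 : ℝ) x, u t) =o[atTop] fun x => x := by
  have hu : MemLp u ⊤ (volume.restrict (Ici ((1 : ℕ) : ℝ))) := by
    simpa only [Nat.cast_one] using Lp.memLp u
  have hbound : (fun x : ℝ => ∫ t in Icc (1 : ℝ) x, u t) =O[atTop] fun _ => (1 : ℝ) := by
    refine .of_bound (lpNorm u ⊤ muIci) ?_
    filter_upwards [eventually_ge_atTop 1] with x hx
    rw [integral_Icc_eq_integral_Ioc, ← intervalIntegral.integral_of_le hx]
    simpa using norm_intervalIntegral_le_of_unitIntegral_eq_zero hu h0 (by simpa using hx)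
  exact hbound.trans_isLittleO (isLittleO_const_id_atTop 1)

theorem map_eq_of_unitIntegral_eq (hψ : ∀ w, ψ w ≤ Mbar w)
    (huv : ∀ n, 1 ≤ n → unitIntegral u n = unitIntegral v n) : ψ u = ψ v := by
  have hzero (n : ℕ) (hn : 1 ≤ n) : unitIntegral (u - v : Linf) n = 0 := by
    have hn' : (1 : ℝ) ≤ n := Nat.one_le_cast.2 hn
    have hint (w : Linf) : IntervalIntegrable w volume n (n + 1) :=
      intervalIntegrable_of_memLp_restrict le_top (Lp.memLp w)
        (uIoc_subset_Ici hn' (by linarith))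
    rw [unitIntegral_congr_ae (Lp.coeFn_sub u v) hn', unitIntegral_sub (hint u) (hint v),
      huv n hn, sub_self]
  rw [← sub_eq_zero, ← map_sub]
  exact map_eq_zero_of_isLittleO hψ (isLittleO_setIntegral_of_unitIntegral_eq_zero hzero)

end DominatedFunctional

/-- For `f ∈ L^∞[1,∞)`, the function `g(n) = ∫_n^{n+1} f(t) dt` is
bounded, the step function `g̃(x) = g(⌊x⌋)` belongs to `L^∞[1,∞)`, and `ψ(f) = ψ(g̃)`
for every `ψ ∈ ℳ`. -/
theorem stmt4 (f : Linf) :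
    (∃ C : ℝ, ∀ n : ℕ, |∫ t in (n:ℝ)..((n:ℝ) + 1), f t| ≤ C) ∧
    MemLp (fun x : ℝ => ∫ t in (⌊x⌋₊ : ℝ)..((⌊x⌋₊ : ℝ) + 1), f t) ⊤ muIci ∧
    (∀ ψ : Linf →ₗ[ℝ] ℝ, (∀ u : Linf, ψ u ≤ Mbar u) →
      ∀ h : Linf,
        (⇑h : ℝ → ℝ) =ᵐ[muIci] (fun x : ℝ => ∫ t in (⌊x⌋₊ : ℝ)..((⌊x⌋₊ : ℝ) + 1), f t) →
        ψ f = ψ h) := by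
  obtain ⟨C, hC⟩ := exists_norm_unitIntegral_le (Lp.memLp f)
  refine ⟨⟨C, hC⟩, memLp_top_comp_natFloor hC muIci, fun ψ hψ h hh => ?_⟩
  refine map_eq_of_unitIntegral_eq hψ fun n hn => ?_
  calc unitIntegral f n = unitIntegral (fun x => unitIntegral f ⌊x⌋₊) n :=
        (unitIntegral_comp_natFloor (unitIntegral f) n).symm
    _ = unitIntegral h n := (unitIntegral_congr_ae hh (Nat.one_le_cast.2 hn)).symm
end
end

section
/- The set 𝓜̃ = {ψ^𝒰 : 𝒰 an ultrafilter on [1,∞) containing no bounded subset of [1,∞)} is a weak*-compact subset of the dual of L^∞[1,∞), and every extreme point of the convex set ℳ belongs to 𝓜̃. -/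
open Filter MeasureTheory Topology

noncomputable section

/-- `𝒰` is an ultrafilter on `[1,∞)` containing no bounded subset of `[1,∞)`. -/
def UnbddUF (𝒰 : Ultrafilter ℝ) : Prop :=
  Set.Ici (1:ℝ) ∈ 𝒰 ∧ ∀ B ⊆ Set.Ici (1:ℝ), Bornology.IsBounded B → B ∉ 𝒰

/-- `ψ^𝒰(f) = 𝒰-lim_x (1/x)∫_1^x f(t) dt`. -/
def psiU (𝒰 : Ultrafilter ℝ) (f : Linf) : ℝ :=
  limUnder (𝒰 : Filter ℝ) (fun x : ℝ => (1 / x) * ∫ t in Set.Icc (1:ℝ) x, f t)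

/-- `𝓜̃ = {ψ^𝒰 : 𝒰 an ultrafilter on [1,∞) containing no bounded set}`. -/
def Mtilde : Set (WeakDual ℝ Linf) :=
  {ψ | ∃ 𝒰 : Ultrafilter ℝ, UnbddUF 𝒰 ∧ ∀ f : Linf, ψ f = psiU 𝒰 f}

/-!
The averages `A x f = (1/x) ∫_1^x f` are functionals of norm at most one, hence form a family in the
weak-\* compact unit ball, and `𝓜̃` is exactly the set of cluster points of `A x` as `x → ∞`. Such a
set is closed, so `𝓜̃` is compact. For each `f`, the largest value `ψ f` at a cluster point `ψ` is
`limsup A x f = M̄(f)`, so by Hahn–Banach `ℳ` is the closed convex hull of `𝓜̃`. Milman's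
converse of the Krein–Milman theorem then places the extreme points of `ℳ` in `𝓜̃`.
-/

section ConvexJoin

theorem extremePoints_convexJoin_subset {𝕜 E : Type*} [Field 𝕜] [LinearOrder 𝕜]
    [IsStrictOrderedRing 𝕜] [AddCommGroup E] [Module 𝕜 E] (s t : Set E) :
    (convexJoin 𝕜 s t).extremePoints 𝕜 ⊆ s ∪ t := by
  intro x hx
  obtain ⟨a, ha, b, hb, hab⟩ := mem_convexJoin.1 hx.1
  have ha' : a ∈ convexJoin 𝕜 s t := subset_convexJoin_left ⟨b, hb⟩ ha
  have hb' : b ∈ convexJoin 𝕜 s t := subset_convexJoin_right ⟨a, ha⟩ hb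
  rcases (mem_extremePoints_iff_forall_segment.1 hx).2 a ha' b hb' hab with rfl | rfl
  exacts [Or.inl ha, Or.inr hb]

variable {𝕜 E : Type*} [Field 𝕜] [LinearOrder 𝕜] [IsStrictOrderedRing 𝕜] [TopologicalSpace 𝕜]
  [ContinuousSub 𝕜] [CompactIccSpace 𝕜] [AddCommGroup E] [Module 𝕜 E] [TopologicalSpace E]
  [ContinuousAdd E] [ContinuousSMul 𝕜 E] {s t : Set E}

theorem isCompact_convexJoin (hs : IsCompact s) (ht : IsCompact t) :
    IsCompact (convexJoin 𝕜 s t) := by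
  have hjoin : convexJoin 𝕜 s t =
      (fun p : 𝕜 × E × E ↦ (1 - p.1) • p.2.1 + p.1 • p.2.2) '' (Set.Icc 0 1 ×ˢ s ×ˢ t) := by
    ext x
    simp only [mem_convexJoin, segment_eq_image, Set.mem_image, Set.mem_prod, Prod.exists]
    tauto
  rw [hjoin]
  exact (isCompact_Icc.prod (hs.prod ht)).image (by fun_prop)

theorem closedConvexHull_union_eq_convexJoin [T2Space E]
    (hs : IsCompact (closedConvexHull 𝕜 s)) (ht : IsCompact (closedConvexHull 𝕜 t))
    (hs₀ : s.Nonempty) (ht₀ : t.Nonempty) :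
    closedConvexHull 𝕜 (s ∪ t) = convexJoin 𝕜 (closedConvexHull 𝕜 s) (closedConvexHull 𝕜 t) := by
  apply Set.Subset.antisymm
  · refine closedConvexHull_min (Set.union_subset ?_ ?_)
      (convex_closedConvexHull.convexJoin convex_closedConvexHull)
      (isCompact_convexJoin hs ht).isClosed
    · exact subset_closedConvexHull.trans
        (subset_convexJoin_left (ht₀.mono subset_closedConvexHull))
    · exact subset_closedConvexHull.trans
        (subset_convexJoin_right (hs₀.mono subset_closedConvexHull))
  · exact convexJoin_subset ((closedConvexHull 𝕜).monotone Set.subset_union_left)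
      ((closedConvexHull 𝕜).monotone Set.subset_union_right) convex_closedConvexHull

theorem extremePoints_closedConvexHull_union_subset [T2Space E]
    (hst : IsCompact (closedConvexHull 𝕜 (s ∪ t))) :
    (closedConvexHull 𝕜 (s ∪ t)).extremePoints 𝕜 ⊆
      closedConvexHull 𝕜 s ∪ closedConvexHull 𝕜 t := by
  rcases s.eq_empty_or_nonempty with rfl | hs₀
  · simpa only [Set.empty_union] using extremePoints_subset.trans Set.subset_union_right
  rcases t.eq_empty_or_nonempty with rfl | ht₀
  · simpa only [Set.union_empty] using extremePoints_subset.trans Set.subset_union_left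
  have hs : IsCompact (closedConvexHull 𝕜 s) := hst.of_isClosed_subset isClosed_closedConvexHull
    ((closedConvexHull 𝕜).monotone Set.subset_union_left)
  have ht : IsCompact (closedConvexHull 𝕜 t) := hst.of_isClosed_subset isClosed_closedConvexHull
    ((closedConvexHull 𝕜).monotone Set.subset_union_right)
  rw [closedConvexHull_union_eq_convexJoin hs ht hs₀ ht₀]
  exact extremePoints_convexJoin_subset _ _

end ConvexJoin

section Milman

variable {E : Type*} [AddCommGroup E] [Module ℝ E] [TopologicalSpace E] [IsTopologicalAddGroup E]
  [ContinuousSMul ℝ E] [LocallyConvexSpace ℝ E]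

theorem exists_mem_nhds_convex_isClosed_notMem [T1Space E] {x y : E} (hxy : x ≠ y) :
    ∃ H ∈ 𝓝 y, Convex ℝ H ∧ IsClosed H ∧ x ∉ H := by
  obtain ⟨L, hL⟩ := geometric_hahn_banach_point_point hxy
  obtain ⟨c, hxc, hcy⟩ := exists_between hL
  exact ⟨{z | c ≤ L z}, L.continuous.continuousAt (Ici_mem_nhds hcy),
    convex_halfSpace_ge L.toLinearMap.isLinear c, isClosed_le continuous_const L.continuous,
    not_le.2 hxc⟩

/-- **Milman's theorem**. Cover `closure s` by finitely many closed convex sets missing `x`: an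
extreme point outside the hulls of two pieces of `s` is also outside the hull of their union. -/
theorem extremePoints_closedConvexHull_subset_closure [T2Space E] {s : Set E}
    (hs : IsCompact (closedConvexHull ℝ s)) :
    (closedConvexHull ℝ s).extremePoints ℝ ⊆ closure s := by
  intro x hx
  by_contra hxs
  suffices h : x ∉ closedConvexHull ℝ (closure s ∩ s) by
    rw [Set.inter_eq_right.2 subset_closure] at h
    exact h hx.1
  have hcl : IsCompact (closure s) :=
    hs.of_isClosed_subset isClosed_closure closure_subset_closedConvexHull
  refine hcl.induction_on (p := fun t ↦ x ∉ closedConvexHull ℝ (t ∩ s)) ?_ ?_ ?_ ?_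
  · rw [Set.empty_inter]
    exact fun h ↦ closedConvexHull_min Set.Subset.rfl convex_empty isClosed_empty h
  · exact fun t u htu hu ht ↦
      hu ((closedConvexHull ℝ).monotone (Set.inter_subset_inter_left s htu) ht)
  · intro t u ht hu h
    rw [Set.union_inter_distrib_right] at h
    have hsub : closedConvexHull ℝ (t ∩ s ∪ u ∩ s) ⊆ closedConvexHull ℝ s :=
      (closedConvexHull ℝ).monotone
        (Set.union_subset Set.inter_subset_right Set.inter_subset_right)
    have hx' := inter_extremePoints_subset_extremePoints_of_subset hsub ⟨h, hx⟩
    exact (extremePoints_closedConvexHull_union_subset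
      (hs.of_isClosed_subset isClosed_closedConvexHull hsub) hx').elim ht hu
  · intro y hy
    obtain ⟨H, hHy, hHconv, hHclosed, hxH⟩ :=
      exists_mem_nhds_convex_isClosed_notMem (ne_of_mem_of_not_mem hy hxs).symm
    exact ⟨H, mem_nhdsWithin_of_mem_nhds hHy, fun h ↦
      hxH (closedConvexHull_min Set.inter_subset_left hHconv hHclosed h)⟩

end Milman

section ClusterPoints

variable {ι X Y : Type*} [TopologicalSpace X] [TopologicalSpace Y] {l : Filter ι} {K : Set X}
  {u : ι → X} {g : X → Y}

theorem exists_tendsto_of_ultrafilter_le (hK : IsCompact K) (hu : ∀ᶠ i in l, u i ∈ K)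
    {𝒰 : Ultrafilter ι} (h𝒰 : 𝒰 ≤ l) : ∃ x ∈ K, Tendsto u 𝒰 (𝓝 x) :=
  hK.ultrafilter_le_nhds (𝒰.map u) (le_principal_iff.2 (h𝒰 hu))

theorem image_setOf_mapClusterPt [T2Space Y] (hK : IsCompact K) (hu : ∀ᶠ i in l, u i ∈ K)
    (hg : Continuous g) : g '' {x | MapClusterPt x l u} = {y | MapClusterPt y l (g ∘ u)} := by
  apply Set.Subset.antisymm
  · rintro _ ⟨x, hx, rfl⟩
    exact MapClusterPt.continuousAt_comp hg.continuousAt hx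
  · intro y hy
    obtain ⟨𝒰, h𝒰, hy⟩ := mapClusterPt_iff_ultrafilter.1 hy
    obtain ⟨x, -, hx⟩ := exists_tendsto_of_ultrafilter_le hK hu h𝒰
    exact ⟨x, mapClusterPt_iff_ultrafilter.2 ⟨𝒰, h𝒰, hx⟩,
      tendsto_nhds_unique ((hg.tendsto x).comp hx) hy⟩

theorem isGreatest_image_setOf_mapClusterPt_limsup [ConditionallyCompleteLinearOrder Y]
    [OrderTopology Y] [l.NeBot] (hK : IsCompact K) (hu : ∀ᶠ i in l, u i ∈ K)
    (hg : Continuous g) :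
    IsGreatest (g '' {x | MapClusterPt x l u}) (limsup (g ∘ u) l) := by
  have hY : Nonempty Y := l.nonempty_of_neBot.map (g ∘ u)
  obtain ⟨a, ha⟩ := hK.bddBelow_image hg.continuousOn
  obtain ⟨b, hb⟩ := hK.bddAbove_image hg.continuousOn
  have hbelow : IsBoundedUnder (· ≥ ·) l (g ∘ u) :=
    isBoundedUnder_of_eventually_ge (hu.mono fun i hi ↦ ha ⟨u i, hi, rfl⟩)
  have habove : IsBoundedUnder (· ≤ ·) l (g ∘ u) :=
    isBoundedUnder_of_eventually_le (hu.mono fun i hi ↦ hb ⟨u i, hi, rfl⟩)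
  rw [image_setOf_mapClusterPt hK hu hg]
  exact isGreatest_mapClusterPt_limsup hbelow.isCoboundedUnder_le habove

end ClusterPoints

section WeakDual

variable {E : Type*} [AddCommGroup E] [Module ℝ E] [TopologicalSpace E]

instance instLocallyConvexSpaceWeakDual : LocallyConvexSpace ℝ (WeakDual ℝ E) :=
  inferInstanceAs (LocallyConvexSpace ℝ (WeakBilin (topDualPairing ℝ E)))

theorem exists_forall_weakDual_apply_eq (L : StrongDual ℝ (WeakDual ℝ E)) :
    ∃ f : E, ∀ φ : WeakDual ℝ E, L φ = φ f := by
  obtain ⟨f, hf⟩ := LinearMap.dualEmbedding_surjective (topDualPairing ℝ E) L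
  exact ⟨f, fun φ ↦ (DFunLike.congr_fun hf φ).symm⟩

theorem mem_closedConvexHull_of_forall_exists_le {S : Set (WeakDual ℝ E)} {ψ : WeakDual ℝ E}
    (h : ∀ f, ∃ φ ∈ S, ψ f ≤ φ f) : ψ ∈ closedConvexHull ℝ S := by
  by_contra hψ
  obtain ⟨L, c, hS, hc⟩ := geometric_hahn_banach_closed_point
    (convex_closedConvexHull (𝕜 := ℝ)) isClosed_closedConvexHull hψ
  obtain ⟨f, hf⟩ := exists_forall_weakDual_apply_eq L
  obtain ⟨φ, hφ, hle⟩ := h f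
  have hlt : φ f < c := hf φ ▸ hS φ (subset_closedConvexHull hφ)
  exact (hlt.trans (hf ψ ▸ hc)).not_ge hle

theorem convex_setOf_forall_apply_le (p : E → ℝ) :
    Convex ℝ {ψ : WeakDual ℝ E | ∀ f, ψ f ≤ p f} := by
  rw [Set.ofPred_forall]
  exact convex_iInter fun f ↦ convex_halfSpace_le ⟨fun _ _ ↦ rfl, fun _ _ ↦ rfl⟩ (p f)

theorem isClosed_setOf_forall_apply_le (p : E → ℝ) :
    IsClosed {ψ : WeakDual ℝ E | ∀ f, ψ f ≤ p f} := by
  rw [Set.ofPred_forall]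
  exact isClosed_iInter fun f ↦ isClosed_le (WeakDual.eval_continuous f) continuous_const

variable {ι : Type*} {l : Filter ι} [l.NeBot] {A : ι → WeakDual ℝ E} {K : Set (WeakDual ℝ E)}

theorem closedConvexHull_setOf_mapClusterPt (hK : IsCompact K) (hA : ∀ᶠ i in l, A i ∈ K) :
    closedConvexHull ℝ {ψ | MapClusterPt ψ l A} = {ψ | ∀ f, ψ f ≤ limsup (fun i ↦ A i f) l} := by
  have hmax (f : E) : IsGreatest ((fun ψ : WeakDual ℝ E ↦ ψ f) '' {ψ | MapClusterPt ψ l A})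
      (limsup (fun i ↦ A i f) l) :=
    isGreatest_image_setOf_mapClusterPt_limsup hK hA (WeakDual.eval_continuous f)
  apply Set.Subset.antisymm
  · exact closedConvexHull_min (fun ψ hψ f ↦ (hmax f).2 ⟨ψ, hψ, rfl⟩)
      (convex_setOf_forall_apply_le _) (isClosed_setOf_forall_apply_le _)
  · intro ψ hψ
    refine mem_closedConvexHull_of_forall_exists_le fun f ↦ ?_
    obtain ⟨φ, hφ, hmaxφ⟩ := (hmax f).1
    exact ⟨φ, hφ, (hψ f).trans_eq hmaxφ.symm⟩

theorem stmt8_general (hK : IsCompact K) (hKconv : Convex ℝ K) (hA : ∀ᶠ i in l, A i ∈ K) :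
    IsCompact {ψ | MapClusterPt ψ l A} ∧
      Set.extremePoints ℝ {ψ | ∀ f, ψ f ≤ limsup (fun i ↦ A i f) l} ⊆
        {ψ | MapClusterPt ψ l A} := by
  have hclosed : IsClosed {ψ | MapClusterPt ψ l A} := isClosed_setOfPred_clusterPt
  have hsub : {ψ | MapClusterPt ψ l A} ⊆ K := fun ψ hψ ↦ hK.isClosed.mem_of_mapClusterPt hψ hA
  have hhull : IsCompact (closedConvexHull ℝ {ψ | MapClusterPt ψ l A}) :=
    hK.of_isClosed_subset isClosed_closedConvexHull
      (closedConvexHull_min hsub hKconv hK.isClosed)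
  refine ⟨hK.of_isClosed_subset hclosed hsub, ?_⟩
  rw [← closedConvexHull_setOf_mapClusterPt hK hA]
  exact (extremePoints_closedConvexHull_subset_closure hhull).trans_eq hclosed.closure_eq

end WeakDual

theorem norm_lpPairing_le {α 𝕜 E F G : Type*} {m : MeasurableSpace α} {μ : Measure α}
    {p q : ENNReal} [Fact (1 ≤ p)] [Fact (1 ≤ q)] [p.HolderConjugate q] [NontriviallyNormedField 𝕜]
    [NormedAddCommGroup E] [NormedSpace 𝕜 E] [NormedAddCommGroup F] [NormedSpace 𝕜 F]
    [NormedAddCommGroup G] [NormedSpace 𝕜 G] [NormedSpace ℝ G] [SMulCommClass ℝ 𝕜 G]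
    [CompleteSpace G] (B : E →L[𝕜] F →L[𝕜] G) (g : Lp E p μ) :
    ‖B.lpPairing μ p q g‖ ≤ ‖B‖ * ‖g‖ := by
  refine ContinuousLinearMap.opNorm_le_bound _ (by positivity) fun f ↦ ?_
  calc ‖B.lpPairing μ p q g f‖ = ‖L1.integral (B.holderL μ p q 1 g f)‖ := by
        rw [L1.integral_eq' 𝕜]; rfl
    _ ≤ ‖B.holderL μ p q 1 g f‖ := L1.norm_integral_le _
    _ ≤ ‖B.holderL μ p q 1‖ * ‖g‖ * ‖f‖ := (B.holderL μ p q 1).le_opNorm₂ g f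
    _ ≤ ‖B‖ * ‖g‖ * ‖f‖ := by gcongr; exact ContinuousLinearMap.norm_holderL_le B

/-- The functional `f ↦ (1/x) ∫_1^x f` on `L^∞[1,∞)`, as the pairing with the integrable function
`(1/x) 𝟙_[1,x]`. -/
def avg (x : ℝ) : WeakDual ℝ Linf :=
  StrongDual.toWeakDual ((ContinuousLinearMap.mul ℝ ℝ).lpPairing muIci 1 ⊤
    (indicatorConstLp 1 measurableSet_Icc isCompact_Icc.measure_ne_top (s := Set.Icc 1 x) (1 / x)))

theorem avg_apply (x : ℝ) (f : Linf) : avg x f = (1 / x) * ∫ t in Set.Icc (1 : ℝ) x, f t := by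
  have hpair : avg x f = ∫ t, (Set.Icc 1 x).indicator (fun t ↦ (1 / x) * f t) t ∂muIci := by
    refine (ContinuousLinearMap.lpPairing_eq_integral _ _ _).trans (integral_congr_ae ?_)
    filter_upwards [indicatorConstLp_coeFn (p := 1) (μ := muIci) (s := Set.Icc 1 x)
      (hs := measurableSet_Icc) (hμs := isCompact_Icc.measure_ne_top) (c := 1 / x)] with t ht
    simp only [ht, ContinuousLinearMap.mul_apply', Set.indicator_mul_left]
  rw [hpair, integral_indicator measurableSet_Icc, integral_const_mul,
    Measure.restrict_restrict_of_subset Set.Icc_subset_Ici_self]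

theorem norm_avg_le_one (x : ℝ) : ‖WeakDual.toStrongDual (avg x)‖ ≤ 1 := by
  refine (norm_lpPairing_le _ _).trans ?_
  rw [ContinuousLinearMap.opNorm_mul, one_mul, norm_indicatorConstLp one_ne_zero ENNReal.one_ne_top]
  have hvol : muIci.real (Set.Icc 1 x) = max (x - 1) 0 := by
    rw [measureReal_restrict_apply measurableSet_Icc, Set.inter_eq_left.2 Set.Icc_subset_Ici_self,
      Real.volume_real_Icc]
  rw [hvol, ENNReal.toReal_one, div_one, Real.rpow_one, Real.norm_eq_abs]
  rcases le_total x 1 with hx | hx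
  · simp [hx]
  · rw [max_eq_left (sub_nonneg.2 hx), abs_of_nonneg (by positivity), one_div_mul_eq_div]
    exact div_le_one_of_le₀ (by linarith) (by linarith)

theorem avg_mem_closedBall (x : ℝ) :
    avg x ∈ WeakDual.toStrongDual ⁻¹' Metric.closedBall (0 : StrongDual ℝ Linf) 1 :=
  mem_closedBall_zero_iff.2 (norm_avg_le_one x)

theorem Mcl_eq_setOf_le_limsup : Mcl = {ψ | ∀ f, ψ f ≤ limsup (fun x ↦ avg x f) atTop} := by
  simp only [Mcl, Mbar, avg_apply]

theorem psiU_eq_of_tendsto {𝒰 : Ultrafilter ℝ} {ψ : WeakDual ℝ Linf} (h : Tendsto avg 𝒰 (𝓝 ψ))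
    (f : Linf) : psiU 𝒰 f = ψ f := by
  have hf : Tendsto (fun x ↦ avg x f) 𝒰 (𝓝 (ψ f)) :=
    ((WeakDual.eval_continuous f).tendsto ψ).comp h
  simp only [avg_apply] at hf
  exact hf.limUnder_eq

theorem unbddUF_iff_le_atTop {𝒰 : Ultrafilter ℝ} : UnbddUF 𝒰 ↔ (𝒰 : Filter ℝ) ≤ atTop := by
  constructor
  · rintro ⟨hIci, hbdd⟩
    refine atTop_basis.ge_iff.2 fun a _ ↦ ?_
    have hIco : (Set.Ico 1 a)ᶜ ∈ 𝒰 := Ultrafilter.compl_mem_iff_notMem.2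
      (hbdd _ Set.Ico_subset_Ici_self (Metric.isBounded_Ico 1 a))
    filter_upwards [hIci, hIco] with x h1x hxa
    exact not_lt.1 fun hx ↦ hxa ⟨h1x, hx⟩
  · intro h
    refine ⟨h (Ici_mem_atTop 1), fun B _ hB hBU ↦ ?_⟩
    obtain ⟨b, hb⟩ := hB.bddAbove
    obtain ⟨x, hxB, hbx⟩ := 𝒰.nonempty_of_mem (inter_mem hBU (h (Ioi_mem_atTop b)))
    exact (hb hxB).not_gt hbx

theorem Mtilde_eq_setOf_mapClusterPt : Mtilde = {ψ | MapClusterPt ψ atTop avg} := by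
  ext ψ
  simp only [Mtilde, Set.mem_ofPred_eq, mapClusterPt_iff_ultrafilter, unbddUF_iff_le_atTop]
  refine exists_congr fun 𝒰 ↦ and_congr_right fun h𝒰 ↦ ⟨fun hψ ↦ ?_, fun h f ↦ ?_⟩
  · obtain ⟨φ, -, hφ⟩ := exists_tendsto_of_ultrafilter_le
      (WeakDual.isCompact_closedBall (0 : StrongDual ℝ Linf) 1)
      (.of_forall avg_mem_closedBall) h𝒰
    have hψφ : ψ = φ := DFunLike.ext _ _ fun f ↦ (hψ f).trans (psiU_eq_of_tendsto hφ f)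
    rwa [hψφ]
  · exact (psiU_eq_of_tendsto h f).symm

/-- `𝓜̃` is weak-*-compact, and every extreme point of `ℳ` lies in `𝓜̃`. -/
theorem stmt8 : IsCompact Mtilde ∧ Set.extremePoints ℝ Mcl ⊆ Mtilde := by
  rw [Mtilde_eq_setOf_mapClusterPt, Mcl_eq_setOf_le_limsup]
  exact stmt8_general (WeakDual.isCompact_closedBall 0 1)
    (convex_closedBall (0 : StrongDual ℝ Linf) 1) (.of_forall avg_mem_closedBall)
end
end

section
/- Let f, g : [1,∞) → ℝ be bounded uniformly continuous functions such that the functions x ↦ x·f(x) and x ↦ x·g(x) are differentiable at almost every x ∈ [1,∞) and their derivatives (defined almost everywhere) are essentially bounded. Then the function x ↦ x·f(x)·g(x) is differentiable at almost every x ∈ [1,∞) and its derivative is essentially bounded. (The set 𝔘 = {f ∈ C_ub([1,∞)) : (x f(x))′ exists a.e. and lies in L^∞[1,∞)} is closed under multiplication, hence is a subalgebra of C_ub([1,∞)).) -/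
open Filter MeasureTheory

noncomputable section

/-! At a point where `w` does not vanish, differentiability of `w • g` forces that of `g`, so the
product rule applies to `w • (f * g) = (w • f) * g`. In the result
`(w • (f * g))' = (w • f)' * g + f * (w • g)' - w' • (f * g)`
the derivatives of `f` and `g` no longer occur, and every term on the right is essentially bounded.
The weight of interest is `w x = x`, which has no zero on `[1, ∞)`. -/

section

variable {𝕜 : Type*} [NontriviallyNormedField 𝕜] {w : 𝕜 → 𝕜} {w' x : 𝕜} {s : Set 𝕜}

theorem hasDerivWithinAt_of_smul {E : Type*} [NormedAddCommGroup E] [NormedSpace 𝕜 E]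
    {g : 𝕜 → E} {q : E} (hw : HasDerivWithinAt w w' s x) (hwx : w x ≠ 0)
    (hwg : HasDerivWithinAt (fun y => w y • g y) q s x) :
    HasDerivWithinAt g ((w x)⁻¹ • (q - w' • g x)) s x := by
  have quotient_rule := (hw.fun_inv hwx).fun_smul hwg
  have eq_quotient : g =ᶠ[nhdsWithin x s] fun y => (w y)⁻¹ • w y • g y := by
    filter_upwards [hw.continuousWithinAt.eventually_ne hwx] with y hwy
    exact (inv_smul_smul₀ hwy _).symm
  refine (quotient_rule.congr_of_eventuallyEq eq_quotient
    (inv_smul_smul₀ hwx _).symm).congr_deriv ?_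
  match_scalars <;> field_simp

variable {A : Type*} [NormedRing A] [NormedAlgebra 𝕜 A] {f g : 𝕜 → A}

theorem hasDerivWithinAt_smul_mul {p q : A} (hw : HasDerivWithinAt w w' s x) (hwx : w x ≠ 0)
    (hwf : HasDerivWithinAt (fun y => w y • f y) p s x)
    (hwg : HasDerivWithinAt (fun y => w y • g y) q s x) :
    HasDerivWithinAt (fun y => w y • (f y * g y))
      (p * g x + f x * q - w' • (f x * g x)) s x := by
  have product_rule := hwf.fun_mul (hasDerivWithinAt_of_smul hw hwx hwg)
  have cancel_weight : w x • f x * (w x)⁻¹ • (q - w' • g x) = f x * q - w' • (f x * g x) := by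
    rw [smul_mul_smul_comm, mul_inv_cancel₀ hwx, one_smul, mul_sub, mul_smul_comm]
  rw [cancel_weight, ← add_sub_assoc] at product_rule
  simpa only [smul_mul_assoc] using product_rule

/-- At `μ`-almost every point `f` has a derivative within `s`, and these derivatives are essentially
bounded: the condition on `x • f` that defines the class `𝔘`. The derivative is a witness `d` rather
than `derivWithin f s x`, which is `0` where `f` is not differentiable. -/
def HasEssBddDerivWithin {E : Type*} [NormedAddCommGroup E] [NormedSpace 𝕜 E]
    [MeasurableSpace 𝕜] (f : 𝕜 → E) (s : Set 𝕜) (μ : Measure 𝕜) : Prop :=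
  ∃ C : ℝ, ∀ᵐ x ∂μ, ∃ d : E, HasDerivWithinAt f d s x ∧ ‖d‖ ≤ C

theorem stmt10_general [MeasurableSpace 𝕜] {μ : Measure 𝕜}
    (hw0 : ∀ᵐ x ∂μ, w x ≠ 0) (hw : HasEssBddDerivWithin w s μ)
    (hf : ∃ C : ℝ, ∀ᵐ x ∂μ, ‖f x‖ ≤ C) (hg : ∃ C : ℝ, ∀ᵐ x ∂μ, ‖g x‖ ≤ C)
    (hwf : HasEssBddDerivWithin (fun x => w x • f x) s μ)
    (hwg : HasEssBddDerivWithin (fun x => w x • g x) s μ) :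
    HasEssBddDerivWithin (fun x => w x • (f x * g x)) s μ := by
  obtain ⟨W, hW⟩ := hw
  obtain ⟨F, hF⟩ := hf
  obtain ⟨G, hG⟩ := hg
  obtain ⟨P, hP⟩ := hwf
  obtain ⟨Q, hQ⟩ := hwg
  refine ⟨P * G + F * Q + W * (F * G), ?_⟩
  filter_upwards [hw0, hW, hF, hG, hP, hQ] with
    x hwx ⟨w', hw', hw'W⟩ hfF hgG ⟨p, hp, hpP⟩ ⟨q, hq, hqQ⟩
  have norm_fg : ‖f x * g x‖ ≤ F * G := norm_mul_le_of_le hfF hgG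
  have norm_smul_fg : ‖w' • (f x * g x)‖ ≤ W * (F * G) :=
    (norm_smul_le _ _).trans
      (mul_le_mul hw'W norm_fg (norm_nonneg _) ((norm_nonneg _).trans hw'W))
  have norm_pg_add_fq : ‖p * g x + f x * q‖ ≤ P * G + F * Q :=
    norm_add_le_of_le (norm_mul_le_of_le hpP hgG) (norm_mul_le_of_le hfF hqQ)
  exact ⟨_, hasDerivWithinAt_smul_mul hw' hwx hp hq,
    norm_sub_le_of_le norm_pg_add_fq norm_smul_fg⟩

end

theorem ae_muIci_ne_zero : ∀ᵐ x ∂muIci, x ≠ 0 :=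
  ae_restrict_of_forall_mem measurableSet_Ici fun _ hx => (zero_lt_one.trans_le hx).ne'

theorem hasEssBddDerivWithin_id {𝕜 : Type*} [NontriviallyNormedField 𝕜] [MeasurableSpace 𝕜]
    (s : Set 𝕜) (μ : Measure 𝕜) : HasEssBddDerivWithin id s μ :=
  ⟨1, .of_forall fun x => ⟨1, hasDerivWithinAt_id x s, norm_one.le⟩⟩

/-- If `f, g` are bounded uniformly continuous functions on `[1,∞)` such
that `x·f(x)` and `x·g(x)` are differentiable at almost every `x ∈ [1,∞)` with essentially
bounded derivatives, then `x·f(x)g(x)` has the same property.  (The class `𝔘` is closed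
under multiplication.) -/
theorem stmt10 (f g : ℝ → ℝ)
    (hfu : UniformContinuousOn f (Set.Ici (1:ℝ)))
    (hgu : UniformContinuousOn g (Set.Ici (1:ℝ)))
    (hfb : ∃ C : ℝ, ∀ x ∈ Set.Ici (1:ℝ), |f x| ≤ C)
    (hgb : ∃ C : ℝ, ∀ x ∈ Set.Ici (1:ℝ), |g x| ≤ C)
    (hf' : ∃ C : ℝ, ∀ᵐ x ∂muIci,
      ∃ d : ℝ, HasDerivWithinAt (fun y : ℝ => y * f y) d (Set.Ici (1:ℝ)) x ∧ |d| ≤ C)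
    (hg' : ∃ C : ℝ, ∀ᵐ x ∂muIci,
      ∃ d : ℝ, HasDerivWithinAt (fun y : ℝ => y * g y) d (Set.Ici (1:ℝ)) x ∧ |d| ≤ C) :
    ∃ C : ℝ, ∀ᵐ x ∂muIci,
      ∃ d : ℝ, HasDerivWithinAt (fun y : ℝ => y * (f y * g y)) d (Set.Ici (1:ℝ)) x ∧ |d| ≤ C := by
  exact stmt10_general ae_muIci_ne_zero (hasEssBddDerivWithin_id _ _)
    (hfb.imp fun _ => ae_restrict_of_forall_mem measurableSet_Ici)
    (hgb.imp fun _ => ae_restrict_of_forall_mem measurableSet_Ici) hf' hg'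
end
end

section
/- For every bounded uniformly continuous function g : [0,∞) → ℝ and every ε > 0 there exists f ∈ L^∞[1,∞) such that limsup_{x→∞} |g(x) − 2^{-x} ∫_1^{2^x} f(t) dt| ≤ ε. (The image of L^∞[1,∞) under the composed averaging operator f ↦ (x ↦ 2^{-x}∫_1^{2^x} f), taken modulo functions vanishing at infinity, is uniformly dense in C_ub modulo functions vanishing at infinity.) -/
/-!
If `h` is bounded and `C¹` with bounded derivative, then the derivative `f` of `t ↦ t h(log₂ t)` is
bounded and `2^{-x} ∫_1^{2^x} f = h(x) - 2^{-x} h(0)`, so `h` lies in the image of the averaging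
operator modulo functions vanishing at infinity. Such `h` are uniformly dense among the bounded
uniformly continuous functions: the moving average of `g` over a window of length `δ` has derivative
`(g(x + δ) - g(x)) / δ` and is uniformly close to `g` when `δ` is small.
-/

open Filter MeasureTheory

noncomputable section

variable {E : Type*} [NormedAddCommGroup E] [NormedSpace ℝ E]

section SteklovMean

/-- The Steklov mean of `g` with step `δ`: the average of `g` over `[x, x + δ]`, used to approximate
uniformly continuous functions by continuously differentiable ones. -/
def steklovMean (δ : ℝ) (g : ℝ → E) (x : ℝ) : E :=
  ⨍ t in x..x + δ, g t

variable [CompleteSpace E] {g : ℝ → E} {δ ε : ℝ}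

theorem hasDerivAt_steklovMean (hg : Continuous g) (δ x : ℝ) :
    HasDerivAt (steklovMean δ g) (δ⁻¹ • (g (x + δ) - g x)) x := by
  have hint (a b : ℝ) : IntervalIntegrable g volume a b := hg.intervalIntegrable a b
  have hprim (y : ℝ) : HasDerivAt (fun u => ∫ t in (0 : ℝ)..u, g t) (g y) y :=
    hg.integral_hasStrictDerivAt 0 y |>.hasDerivAt
  have hmean : steklovMean δ g =
      fun y => δ⁻¹ • ((∫ t in (0 : ℝ)..y + δ, g t) - ∫ t in (0 : ℝ)..y, g t) := by
    funext y
    rw [intervalIntegral.integral_interval_sub_left (hint _ _) (hint _ _), steklovMean,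
      interval_average_eq, add_sub_cancel_left]
  rw [hmean]
  exact (((hprim (x + δ)).comp_add_const x δ).sub (hprim x)).const_smul δ⁻¹

theorem contDiff_one_steklovMean (hg : Continuous g) (δ : ℝ) : ContDiff ℝ 1 (steklovMean δ g) := by
  refine contDiff_one_iff_deriv.2
    ⟨fun x => (hasDerivAt_steklovMean hg δ x).differentiableAt, ?_⟩
  rw [funext fun x => (hasDerivAt_steklovMean hg δ x).deriv]
  fun_prop

theorem norm_steklovMean_sub_le (hg : Continuous g) (hδ : 0 < δ) {x : ℝ}
    (h : ∀ t ∈ Set.Ioc x (x + δ), ‖g t - g x‖ ≤ ε) : ‖steklovMean δ g x - g x‖ ≤ ε := by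
  rw [← mem_closedBall_iff_norm, steklovMean, Set.uIoc_of_le (by linarith)]
  refine (convex_closedBall (g x) ε).set_average_mem Metric.isClosed_closedBall (by simpa)
    measure_Ioc_lt_top.ne ?_ hg.integrableOn_Ioc
  filter_upwards [ae_restrict_mem measurableSet_Ioc] with t ht
  exact mem_closedBall_iff_norm.2 (h t ht)

theorem exists_contDiff_one_norm_sub_le (hg : UniformContinuous g) (hε : 0 < ε) :
    ∃ h : ℝ → E, ContDiff ℝ 1 h ∧ (∃ B, ∀ x, ‖deriv h x‖ ≤ B) ∧ ∀ x, ‖h x - g x‖ ≤ ε := by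
  obtain ⟨δ, hδ, hgδ⟩ := Metric.uniformContinuous_iff_le.1 hg ε hε
  have hclose {x t : ℝ} (ht : t ∈ Set.Icc x (x + δ)) : ‖g t - g x‖ ≤ ε := by
    rw [← dist_eq_norm]
    refine hgδ ?_
    rw [Real.dist_eq, abs_le]
    constructor <;> linarith [ht.1, ht.2]
  refine ⟨steklovMean δ g, contDiff_one_steklovMean hg.continuous δ, ⟨δ⁻¹ * ε, fun x => ?_⟩,
    fun x => norm_steklovMean_sub_le hg.continuous hδ fun t ht =>
      hclose (Set.Ioc_subset_Icc_self ht)⟩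
  rw [(hasDerivAt_steklovMean hg.continuous δ x).deriv, norm_smul,
    Real.norm_of_nonneg (by positivity)]
  gcongr
  exact hclose ⟨by linarith, le_rfl⟩

end SteklovMean

section ExponentialMean

/-- The averaging operator of the theorem in base `b`: up to the factor `1 - b ^ (-x)`, the mean
of `f` over `[1, b ^ x]`. -/
def exponentialMean (b : ℝ) (f : ℝ → E) (x : ℝ) : E :=
  b ^ (-x) • ∫ t in Set.Icc 1 (b ^ x), f t

/-- The derivative of `t ↦ t • h (logb b t)`, a preimage of `h` under `exponentialMean b` up to
a term vanishing at infinity. -/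
def exponentialMeanPreimage (b : ℝ) (h : ℝ → E) (t : ℝ) : E :=
  h (Real.logb b t) + (Real.log b)⁻¹ • deriv h (Real.logb b t)

variable {h : ℝ → E} {b : ℝ}

theorem hasDerivAt_smul_comp_logb {t : ℝ} (hh : DifferentiableAt ℝ h (Real.logb b t))
    (ht : t ≠ 0) :
    HasDerivAt (fun s => s • h (Real.logb b s)) (exponentialMeanPreimage b h t) t := by
  have hlogb : HasDerivAt (Real.logb b) (t⁻¹ / Real.log b) t :=
    (Real.hasDerivAt_log ht).div_const _
  have hcoeff : t * (t⁻¹ / Real.log b) = (Real.log b)⁻¹ := by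
    rw [mul_div_assoc', mul_inv_cancel₀ ht, one_div]
  refine ((hasDerivAt_id t).smul (hh.hasDerivAt.scomp t hlogb)).congr_deriv ?_
  rw [exponentialMeanPreimage, smul_smul, id, hcoeff, one_smul, add_comm, Function.comp_apply]

theorem continuousOn_exponentialMeanPreimage (hh : ContDiff ℝ 1 h) (b : ℝ) :
    ContinuousOn (exponentialMeanPreimage b h) {0}ᶜ := by
  have hlogb : ContinuousOn (Real.logb b) {0}ᶜ := Real.continuousOn_log.div_const _
  exact (hh.continuous.comp_continuousOn hlogb).add
    ((hh.continuous_deriv_one.comp_continuousOn hlogb).const_smul _)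

theorem integral_exponentialMeanPreimage [CompleteSpace E] (hh : ContDiff ℝ 1 h) (b : ℝ) {T : ℝ}
    (hT : 0 < T) :
    ∫ t in (1 : ℝ)..T, exponentialMeanPreimage b h t = T • h (Real.logb b T) - h 0 := by
  have hne : ∀ t ∈ Set.uIcc 1 T, t ≠ 0 := fun t ht =>
    ((lt_min one_pos hT).trans_le ht.1).ne'
  rw [intervalIntegral.integral_eq_sub_of_hasDerivAt
    (fun t ht => hasDerivAt_smul_comp_logb (hh.differentiable_one _) (hne t ht))
    ((continuousOn_exponentialMeanPreimage hh b).mono hne).intervalIntegrable]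
  simp only [Real.logb_one, one_smul]

theorem exponentialMean_exponentialMeanPreimage [CompleteSpace E] (hh : ContDiff ℝ 1 h)
    (hb : 1 < b) {x : ℝ} (hx : 0 ≤ x) :
    exponentialMean b (exponentialMeanPreimage b h) x = h x - b ^ (-x) • h 0 := by
  have hb₀ : 0 < b := one_pos.trans hb
  rw [exponentialMean, integral_Icc_eq_integral_Ioc,
    ← intervalIntegral.integral_of_le (Real.one_le_rpow hb.le hx),
    integral_exponentialMeanPreimage hh b (Real.rpow_pos_of_pos hb₀ x),
    Real.logb_rpow hb₀ hb.ne', smul_sub, smul_smul, ← Real.rpow_add hb₀, neg_add_cancel,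
    Real.rpow_zero, one_smul]

theorem tendsto_sub_exponentialMean_exponentialMeanPreimage [CompleteSpace E]
    (hh : ContDiff ℝ 1 h) (hb : 1 < b) :
    Tendsto (fun x => h x - exponentialMean b (exponentialMeanPreimage b h) x) atTop (nhds 0) := by
  have hlim : Tendsto (fun x : ℝ => b ^ (-x) • h 0) atTop (nhds 0) := by
    simpa only [zero_smul, Function.comp_apply] using ((tendsto_rpow_atBot_of_base_gt_one b hb).comp
      tendsto_neg_atTop_atBot).smul_const (h 0)
  refine hlim.congr' ?_
  filter_upwards [eventually_ge_atTop 0] with x hx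
  rw [exponentialMean_exponentialMeanPreimage hh hb hx, sub_sub_cancel]

theorem memLp_top_exponentialMeanPreimage (hh : ContDiff ℝ 1 h) (hA : ∃ A, ∀ x, ‖h x‖ ≤ A)
    (hB : ∃ B, ∀ x, ‖deriv h x‖ ≤ B) (b : ℝ) (μ : Measure ℝ) :
    MemLp (exponentialMeanPreimage b h) ⊤ μ := by
  obtain ⟨A, hA⟩ := hA
  obtain ⟨B, hB⟩ := hB
  have hlogb : StronglyMeasurable (Real.logb b) :=
    (Real.measurable_log.div_const _).stronglyMeasurable
  have hmeas : StronglyMeasurable (exponentialMeanPreimage b h) :=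
    (hh.continuous.comp_stronglyMeasurable hlogb).add
      ((hh.continuous_deriv_one.comp_stronglyMeasurable hlogb).const_smul _)
  refine memLp_top_of_bound hmeas.aestronglyMeasurable (A + ‖(Real.log b)⁻¹‖ * B)
    (Eventually.of_forall fun t => ?_)
  refine (norm_add_le _ _).trans (add_le_add (hA _) ?_)
  rw [norm_smul]
  gcongr
  exact hB _

end ExponentialMean

theorem uniformContinuous_comp_max {α : Type*} [UniformSpace α] {g : ℝ → α} {a : ℝ}
    (hg : UniformContinuousOn g (Set.Ici a)) : UniformContinuous fun x => g (max x a) := by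
  rw [← uniformContinuousOn_univ]
  exact hg.comp (LipschitzWith.id.max_const a).uniformContinuous.uniformContinuousOn
    fun x _ => le_max_right x a

theorem stmt11_general [CompleteSpace E] {b : ℝ} (hb : 1 < b) {g : ℝ → E}
    (hgu : UniformContinuousOn g (Set.Ici 0)) (hgb : ∃ C, ∀ x ∈ Set.Ici (0 : ℝ), ‖g x‖ ≤ C)
    {ε : ℝ} (hε : 0 < ε) :
    ∃ f : ℝ → E, MemLp f ⊤ muIci ∧ ∀ᶠ x in atTop, ‖g x - exponentialMean b f x‖ ≤ ε := by
  obtain ⟨C, hC⟩ := hgb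
  obtain ⟨h, hh, hderiv, hclose⟩ :=
    exists_contDiff_one_norm_sub_le (uniformContinuous_comp_max hgu) (half_pos hε)
  have hbound (x : ℝ) : ‖h x‖ ≤ C + ε / 2 :=
    (norm_le_norm_add_norm_sub' _ _).trans (add_le_add (hC _ (le_max_right x 0)) (hclose x))
  refine ⟨exponentialMeanPreimage b h,
    memLp_top_exponentialMeanPreimage hh ⟨_, hbound⟩ hderiv b muIci, ?_⟩
  have hsmall : ∀ᶠ x in atTop,
      ‖h x - exponentialMean b (exponentialMeanPreimage b h) x‖ ≤ ε / 2 :=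
    (tendsto_sub_exponentialMean_exponentialMeanPreimage hh hb).norm.eventually_le_const
      (norm_zero.trans_lt (half_pos hε))
  filter_upwards [eventually_ge_atTop 0, hsmall] with x hx hmean
  have hgh : ‖g x - h x‖ ≤ ε / 2 := by
    simpa only [max_eq_left hx, norm_sub_rev] using hclose x
  calc ‖g x - exponentialMean b (exponentialMeanPreimage b h) x‖
      ≤ ‖g x - h x‖ + ‖h x - exponentialMean b (exponentialMeanPreimage b h) x‖ :=
        norm_sub_le_norm_sub_add_norm_sub _ _ _
    _ ≤ ε / 2 + ε / 2 := add_le_add hgh hmean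
    _ = ε := add_halves ε

/-- For every bounded uniformly continuous `g : [0,∞) → ℝ` and every
`ε > 0` there is `f ∈ L^∞[1,∞)` with
`limsup_{x→∞} |g(x) − 2^{-x} ∫_1^{2^x} f(t) dt| ≤ ε`. -/
theorem stmt11 (g : ℝ → ℝ)
    (hgu : UniformContinuousOn g (Set.Ici (0:ℝ)))
    (hgb : ∃ C : ℝ, ∀ x ∈ Set.Ici (0:ℝ), |g x| ≤ C)
    (ε : ℝ) (hε : 0 < ε) :
    ∃ f : ℝ → ℝ, MemLp f ⊤ muIci ∧
      limsup (fun x : ℝ =>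
          |g x - (2:ℝ) ^ (-x) * ∫ t in Set.Icc (1:ℝ) ((2:ℝ) ^ x), f t|) atTop ≤ ε := by
  obtain ⟨f, hf, hgf⟩ := stmt11_general one_lt_two hgu hgb hε
  exact ⟨f, hf, limsup_le_of_le (isCoboundedUnder_le_of_le _ fun _ => abs_nonneg _) hgf⟩
end
end

section
/- Let η be a free ultrafilter on ℕ and t ∈ [0,1). Suppose there exists X ∈ η such that X+m ∉ η for every integer m ≥ 1. Then the density measure ν_{(η,t)} has the additive property. -/
open Filter Topology

noncomputable section

/-- The density measure `ν_{(η,t)}(A) = η-lim_n |A ∩ [1,⌊2^t·2^n⌋]| / (2^t·2^n)`. -/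
def nuDen (η : Ultrafilter ℕ) (t : ℝ) (A : Set ℕ) : ℝ :=
  limUnder (η : Filter ℕ)
    (fun n : ℕ =>
      (Nat.card (A ∩ Set.Icc 1 ⌊(2:ℝ) ^ t * 2 ^ n⌋₊ : Set ℕ) : ℝ) / ((2:ℝ) ^ t * 2 ^ n))

/-- A set function `ν` on `𝒫(ℕ)` has the additive property if for every increasing
sequence `A₁ ⊆ A₂ ⊆ ⋯` there is `B ⊆ ℕ` with `ν(B) = lim_i ν(A_i)` and
`ν(A_i \ B) = 0` for all `i`. -/
def AddProp (ν : Set ℕ → ℝ) : Prop :=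
  ∀ A : ℕ → Set ℕ, (∀ i, A i ⊆ A (i + 1)) →
    ∃ B : Set ℕ, Tendsto (fun i => ν (A i)) atTop (𝓝 (ν B)) ∧ ∀ i, ν (A i \ B) = 0

/-!
Put `D n = 2^t·2^n`; only its geometric growth matters. Fix an increasing sequence `A i` and let
`ι n → ∞` so slowly that the density of `A (ι n)` in `[1, D n]` tends along `η` to the limit of the
densities of the `A i`. Cut `ℕ` into blocks ending at `D n`, `n ∈ X`, and let `B` agree with
`A (ι n)` on the block ending at `D n`. For `η`-most `n` the predecessor of `n` in `X` lies
arbitrarily far below `n`, because no translate of `X` by a fixed `m ≥ 1` belongs to `η`. The block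
ending at `D n` is then almost all of `[1, D n]`, where `B` and `A (ι n)` thus nearly coincide.
-/

open scoped symmDiff

/-- The relative count `|A ∩ [1, ⌊x⌋]| / x`, with value `0` at `x = 0`; the density measures are its
limits along sequences `x = D n`. -/
def countRatio (A : Set ℕ) (x : ℝ) : ℝ :=
  (A ∩ Set.Icc 1 ⌊x⌋₊).ncard / x

section CountRatio

variable {A B : Set ℕ} {x y : ℝ}

lemma countRatio_nonneg (A : Set ℕ) (hx : 0 ≤ x) : 0 ≤ countRatio A x := by
  unfold countRatio
  positivity

lemma countRatio_mono (hx : 0 ≤ x) (h : A ⊆ B) : countRatio A x ≤ countRatio B x := by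
  unfold countRatio
  gcongr
  exact (Set.finite_Icc _ _).inter_of_right _

lemma countRatio_union_le (A B : Set ℕ) (hx : 0 ≤ x) :
    countRatio (A ∪ B) x ≤ countRatio A x + countRatio B x := by
  unfold countRatio
  rw [← add_div, Set.union_inter_distrib_right]
  gcongr
  exact_mod_cast Set.ncard_union_le _ _

lemma countRatio_le_div (hx : 0 ≤ x) (hy : 0 ≤ y) (h : ∀ a ∈ A, a ≤ x → a ≤ y) :
    countRatio A x ≤ y / x := by
  have hsub : A ∩ Set.Icc 1 ⌊x⌋₊ ⊆ Set.Icc 1 ⌊y⌋₊ := fun a ⟨haA, ha1, hax⟩ =>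
    ⟨ha1, Nat.le_floor (h a haA ((Nat.le_floor_iff hx).1 hax))⟩
  have hcard : (A ∩ Set.Icc 1 ⌊x⌋₊).ncard ≤ ⌊y⌋₊ := by
    simpa [Set.ncard_eq_toFinset_card'] using Set.ncard_le_ncard hsub
  unfold countRatio
  gcongr
  exact (Nat.cast_le.2 hcard).trans (Nat.floor_le hy)

lemma countRatio_le_one (A : Set ℕ) (hx : 0 ≤ x) : countRatio A x ≤ 1 :=
  (countRatio_le_div hx hx fun _ _ => id).trans (div_self_le_one x)

lemma abs_countRatio_sub_le_symmDiff (A B : Set ℕ) (hx : 0 ≤ x) :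
    |countRatio A x - countRatio B x| ≤ countRatio (A ∆ B) x := by
  have le_add (A B : Set ℕ) : countRatio A x ≤ countRatio B x + countRatio (A ∆ B) x :=
    (countRatio_mono hx (symmDiff_le_iff.1 le_rfl).1).trans (countRatio_union_le _ _ hx)
  have hAB := le_add A B
  have hBA := le_add B A
  rw [symmDiff_comm] at hBA
  exact abs_le.2 ⟨by linarith, by linarith⟩

end CountRatio

/-- The density measure `A ↦ η-lim_n |A ∩ [1, ⌊D n⌋]| / D n` along the sequence `D`; the measure
`ν_{(η,t)}` is the case `D n = 2^t·2^n`. -/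
def densityAlong (η : Ultrafilter ℕ) (D : ℕ → ℝ) (A : Set ℕ) : ℝ :=
  limUnder (η : Filter ℕ) fun n => countRatio A (D n)

section DensityAlong

variable (η : Ultrafilter ℕ) {D : ℕ → ℝ}

lemma tendsto_countRatio_densityAlong (hD : ∀ n, 0 ≤ D n) (A : Set ℕ) :
    Tendsto (fun n => countRatio A (D n)) η (𝓝 (densityAlong η D A)) := by
  have hbdd : ∀ n, countRatio A (D n) ∈ Set.Icc (0 : ℝ) 1 := fun n =>
    ⟨countRatio_nonneg A (hD n), countRatio_le_one A (hD n)⟩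
  obtain ⟨a, -, ha⟩ := isCompact_Icc.ultrafilter_le_nhds
    (η.map fun n => countRatio A (D n)) (tendsto_principal.2 (.of_forall hbdd))
  exact tendsto_nhds_limUnder ⟨a, ha⟩

lemma densityAlong_mono (hD : ∀ n, 0 ≤ D n) : Monotone (densityAlong η D) := fun A B h =>
  le_of_tendsto_of_tendsto' (tendsto_countRatio_densityAlong η hD A)
    (tendsto_countRatio_densityAlong η hD B) fun n => countRatio_mono (hD n) h

lemma densityAlong_le_one (hD : ∀ n, 0 ≤ D n) (A : Set ℕ) : densityAlong η D A ≤ 1 :=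
  le_of_tendsto' (tendsto_countRatio_densityAlong η hD A) fun n => countRatio_le_one A (hD n)

end DensityAlong

/-- A lacunary sequence in the sense of Hadamard: its terms are positive and grow at least
geometrically. -/
structure IsLacunary (D : ℕ → ℝ) : Prop where
  pos : ∀ n, 0 < D n
  exists_ratio : ∃ q > 1, ∀ n, q * D n ≤ D (n + 1)

lemma isLacunary_const_mul_pow {c q : ℝ} (hc : 0 < c) (hq : 1 < q) :
    IsLacunary fun n => c * q ^ n where
  pos n := by positivity
  exists_ratio := ⟨q, hq, fun n => le_of_eq (by ring)⟩

namespace IsLacunary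

variable {D : ℕ → ℝ}

lemma nonneg (hD : IsLacunary D) (n : ℕ) : 0 ≤ D n := (hD.pos n).le

lemma monotone (hD : IsLacunary D) : Monotone D := by
  obtain ⟨q, hq, hstep⟩ := hD.exists_ratio
  exact monotone_nat_of_le_succ fun n =>
    (le_mul_of_one_le_left (hD.nonneg n) hq.le).trans (hstep n)

lemma exists_forall_le_mul (hD : IsLacunary D) {ε : ℝ} (hε : 0 < ε) :
    ∃ k, ∀ m n, m + k ≤ n → D m ≤ ε * D n := by
  obtain ⟨q, hq, hstep⟩ := hD.exists_ratio
  obtain ⟨k, hk⟩ := pow_unbounded_of_one_lt ε⁻¹ hq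
  refine ⟨k, fun m n hmn => (inv_mul_le_iff₀ hε).1 ?_⟩
  calc ε⁻¹ * D m ≤ q ^ k * D m := mul_le_mul_of_nonneg_right hk.le (hD.nonneg m)
    _ ≤ D (m + k) :=
      geom_le (u := fun j => D (m + j)) (by linarith) k fun j _ => hstep (m + j)
    _ ≤ D n := hD.monotone hmn

end IsLacunary

/-- The set that agrees with `C n`, for each `n ∈ X`, on the block of numbers `x ≤ D n` lying above
all `D m` with `m ∈ X` and `m < n`. -/
def glueBlocks (D : ℕ → ℝ) (X : Set ℕ) (C : ℕ → Set ℕ) : Set ℕ :=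
  {x | ∃ n ∈ X, (∀ m ∈ X, m < n → D m < x) ∧ x ≤ D n ∧ x ∈ C n}

section Gluing

variable {D : ℕ → ℝ} {X : Set ℕ} {l : Filter ℕ}

lemma mem_glueBlocks_iff {C : ℕ → Set ℕ} {n x : ℕ} (hn : n ∈ X) (hlt : ∀ m ∈ X, m < n → D m < x)
    (hle : x ≤ D n) : x ∈ glueBlocks D X C ↔ x ∈ C n := by
  refine ⟨?_, fun hx => ⟨n, hn, hlt, hle, hx⟩⟩
  rintro ⟨n', hn', hlt', hle', hx⟩
  obtain h | rfl | h := lt_trichotomy n n'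
  · exact absurd hle (hlt' n hn h).not_ge
  · exact hx
  · exact absurd hle' (hlt n' hn' h).not_ge

lemma eventually_forall_lt_imp_add_lt
    (hX : ∀ m, 1 ≤ m → ∀ᶠ n in l, n ∉ (fun x => x + m) '' X) (k : ℕ) :
    ∀ᶠ n in l, ∀ m ∈ X, m < n → m + k < n := by
  have hshift : ∀ᶠ n in l, ∀ j ∈ Finset.Icc 1 k, n ∉ (fun x => x + j) '' X :=
    (eventually_all_finset _).2 fun j hj => hX j (Finset.mem_Icc.1 hj).1
  filter_upwards [hshift] with n hn m hm hlt
  by_contra! hle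
  exact hn (n - m) (Finset.mem_Icc.2 (by lia)) ⟨m, hm, Nat.add_sub_of_le hlt.le⟩

lemma tendsto_countRatio_glueBlocks_symmDiff (hD : IsLacunary D) (hXl : X ∈ l)
    (hX : ∀ m, 1 ≤ m → ∀ᶠ n in l, n ∉ (fun x => x + m) '' X) (C : ℕ → Set ℕ) :
    Tendsto (fun n => countRatio (glueBlocks D X C ∆ C n) (D n)) l (𝓝 0) := by
  refine tendsto_order.2 ⟨fun a ha => .of_forall fun n =>
    ha.trans_le (countRatio_nonneg _ (hD.nonneg n)), fun ε hε => ?_⟩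
  obtain ⟨k, hk⟩ := hD.exists_forall_le_mul (half_pos hε)
  filter_upwards [hXl, eventually_forall_lt_imp_add_lt hX k] with n hn hgap
  have hinitial : ∀ x ∈ glueBlocks D X C ∆ C n, x ≤ D n → x ≤ ε / 2 * D n := by
    intro x hx hxn
    obtain ⟨m, hm, hmn, hxm⟩ : ∃ m ∈ X, m < n ∧ x ≤ D m := by
      by_contra! hlt
      have hiff := mem_glueBlocks_iff (C := C) hn hlt hxn
      exact hx.elim (fun h => h.2 (hiff.1 h.1)) fun h => h.2 (hiff.2 h.1)
    exact hxm.trans (hk m n (hgap m hm hmn).le)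
  calc countRatio (glueBlocks D X C ∆ C n) (D n)
      ≤ ε / 2 * D n / D n :=
        countRatio_le_div (hD.nonneg n) (mul_nonneg (half_pos hε).le (hD.nonneg n)) hinitial
    _ = ε / 2 := mul_div_cancel_right₀ _ (hD.pos n).ne'
    _ < ε := half_lt_self hε

end Gluing

lemma exists_tendsto_atTop_eventually {β : Type*} {l : Filter β} {f : β → ℕ}
    (hf : Tendsto f l atTop) {p : ℕ → β → Prop} (hp : ∀ i, ∀ᶠ b in l, p i b) :
    ∃ ι : β → ℕ, Tendsto ι l atTop ∧ ∀ᶠ b in l, p (ι b) b := by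
  classical
  refine ⟨fun b => Nat.findGreatest (p · b) (f b), tendsto_atTop.2 fun i => ?_, ?_⟩
  · filter_upwards [hp i, hf.eventually_ge_atTop i] with b hpb hib
    exact Nat.le_findGreatest hib hpb
  · filter_upwards [hp 0] with b hpb
    exact Nat.findGreatest_spec (P := (p · b)) (Nat.zero_le _) hpb

lemma exists_diagonal_tendsto {β E : Type*} [PseudoMetricSpace E] {l : Filter β} {f : β → ℕ}
    (hf : Tendsto f l atTop) {g : ℕ → β → E} {α : ℕ → E} {L : E}
    (hg : ∀ i, Tendsto (g i) l (𝓝 (α i))) (hα : Tendsto α atTop (𝓝 L)) :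
    ∃ ι : β → ℕ, Tendsto ι l atTop ∧ Tendsto (fun b => g (ι b) b) l (𝓝 L) := by
  obtain ⟨ι, hι, hclose⟩ := exists_tendsto_atTop_eventually hf fun i =>
    Metric.tendsto_nhds.1 (hg i) (1 / ((i : ℝ) + 1)) Nat.one_div_pos_of_nat
  have hdist : Tendsto (fun b => dist (α (ι b)) (g (ι b) b)) l (𝓝 0) :=
    squeeze_zero' (.of_forall fun _ => dist_nonneg)
      (hclose.mono fun b hb => (dist_comm _ _).trans_le hb.le)
      (tendsto_one_div_add_atTop_nhds_zero_nat.comp hι)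
  exact ⟨ι, hι, (hα.comp hι).congr_dist hdist⟩

theorem stmt15_general (η : Ultrafilter ℕ) (hη : (η : Filter ℕ) ≤ Filter.cofinite)
    {D : ℕ → ℝ} (hD : IsLacunary D)
    (hX : ∃ X ∈ η, ∀ m : ℕ, 1 ≤ m → (fun x => x + m) '' X ∉ η) :
    AddProp (densityAlong η D) := by
  obtain ⟨X, hXη, hXm⟩ := hX
  intro A hA
  have hAmono : Monotone A := monotone_nat_of_le_succ hA
  have hlim := tendsto_atTop_ciSup ((densityAlong_mono η hD.nonneg).comp hAmono)
    ⟨1, Set.forall_mem_range.2 fun i => densityAlong_le_one η hD.nonneg (A i)⟩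
  obtain ⟨ι, hι, hdiag⟩ := exists_diagonal_tendsto (hη.trans_eq Nat.cofinite_eq_atTop)
    (fun i => tendsto_countRatio_densityAlong η hD.nonneg (A i)) hlim
  set B := glueBlocks D X (A ∘ ι)
  have hBA : Tendsto (fun n => countRatio (B ∆ A (ι n)) (D n)) η (𝓝 0) :=
    tendsto_countRatio_glueBlocks_symmDiff hD hXη
      (fun m hm => Ultrafilter.compl_mem_iff_notMem.2 (hXm m hm)) (A ∘ ι)
  refine ⟨B, ?_, fun i => ?_⟩
  · have hB : Tendsto (fun n => countRatio B (D n)) η _ := hdiag.congr_dist <|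
      squeeze_zero (fun _ => dist_nonneg) (fun n => (dist_comm _ _).trans_le
        (abs_countRatio_sub_le_symmDiff B (A (ι n)) (hD.nonneg n))) hBA
    rwa [densityAlong, hB.limUnder_eq]
  · refine Tendsto.limUnder_eq (squeeze_zero' (.of_forall fun n =>
      countRatio_nonneg _ (hD.nonneg n)) ?_ hBA)
    filter_upwards [hι.eventually_ge_atTop i] with n hin
    exact countRatio_mono (hD.nonneg n)
      ((Set.sdiff_subset_sdiff_left (hAmono hin)).trans Set.subset_union_right)

/-- If some `X ∈ η` satisfies `X + m ∉ η` for every `m ≥ 1`, then the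
density measure `ν_{(η,t)}` has the additive property. -/
theorem stmt15 (η : Ultrafilter ℕ) (hη : (η : Filter ℕ) ≤ Filter.cofinite)
    (t : ℝ) (ht : t ∈ Set.Ico (0:ℝ) 1)
    (hX : ∃ X ∈ η, ∀ m : ℕ, 1 ≤ m → (fun x => x + m) '' X ∉ η) :
    AddProp (nuDen η t) :=
  stmt15_general η hη (isLacunary_const_mul_pow (Real.rpow_pos_of_pos two_pos t) one_lt_two) hX
end
end

section
/- Let η be a free ultrafilter on ℕ and t ∈ [0,1). Suppose that for every X ∈ η there exists an integer m ≥ 1 with X+m ∈ η. Then the density measure ν_{(η,t)} does not have the additive property. -/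
open Filter Topology

noncomputable section

/-!
Cut `ℕ` into the blocks `(⌊2^t·2^(n-1)⌋, ⌊2^t·2^n⌋]`. For each `m ≥ 1` some `X m ∈ η` is disjoint
from its translate `X m + m`. Put `S i = {l | l + m ∈ X m for some 1 ≤ m ≤ i}`: these sets increase,
none of them is in `η`, and `n - m ∈ S m` for `η`-almost all `n`. Let `A i` be the union of the
blocks indexed by `S i`. It misses the block `n` for `η`-almost all `n`, so `ν (A i) ≤ 1/2`, and a
set `B` associated with the `A i` by the additive property has `ν B ≤ 1/2`. On the other hand
`ν (A m \ B) = 0` forces `B` to fill the block `n - m` asymptotically along `η`, for every `m ≥ 1`;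
as `η` is a limit of its backward shifts, `B` also fills the block `n`. Filling the blocks `n` and
`n - 1` already gives `ν B ≥ 3/4`.
-/

section Recurrence

variable {η : Ultrafilter ℕ}

lemma le_atTop_of_forall_exists_image_add_mem {f : Filter ℕ}
    (hf : ∀ X ∈ f, ∃ m : ℕ, 1 ≤ m ∧ (fun x => x + m) '' X ∈ f) : f ≤ atTop := by
  refine le_iInf fun k => le_principal_iff.2 ?_
  induction k with
  | zero => exact univ_mem' Nat.zero_le
  | succ k ih =>
    obtain ⟨m, hm, hmem⟩ := hf (Set.Ici k) ih
    filter_upwards [hmem]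
    rintro _ ⟨x, hx : k ≤ x, rfl⟩
    exact Nat.add_le_add hx hm

lemma tendsto_of_forall_tendsto_sub {α : Type*} {l : Filter α} {f : ℕ → α}
    (hη : ∀ X ∈ η, ∃ m : ℕ, 1 ≤ m ∧ (fun x => x + m) '' X ∈ η)
    (hf : ∀ m, 1 ≤ m → Tendsto (fun n => f (n - m)) η l) : Tendsto f η l := by
  intro U hU
  by_contra hfU
  obtain ⟨m, hm, hmem⟩ := hη (f ⁻¹' U)ᶜ (Ultrafilter.compl_mem_iff_notMem.2 hfU)
  obtain ⟨_, ⟨x, hx, rfl⟩, hxU⟩ := η.nonempty_of_mem (inter_mem hmem (hf m hm hU))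
  exact hx (by simpa using hxU)

lemma exists_mem_forall_add_notMem (η : Ultrafilter ℕ) {m : ℕ} (hm : 1 ≤ m) :
    ∃ X ∈ η, ∀ n ∈ X, n + m ∉ X := by
  have h_finite : Set.Iio (m + 1) ∈ η.map (· % (m + 1)) :=
    mem_map.2 (univ_mem' fun n => Nat.mod_lt n m.succ_pos)
  obtain ⟨r, -, hr⟩ := Ultrafilter.eq_pure_of_finite_mem (Set.finite_Iio _) h_finite
  have h_residue : {r} ∈ η.map (· % (m + 1)) := hr ▸ Set.mem_singleton r
  refine ⟨{n | n % (m + 1) = r}, h_residue, fun n hn hnm => ?_⟩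
  have h_modEq : n + m ≡ n + 0 [MOD m + 1] := hnm.trans hn.symm
  have h_dvd : m + 1 ∣ m := (Nat.modEq_zero_iff_dvd).1 (h_modEq.add_left_cancel' n)
  exact absurd (Nat.le_of_dvd hm h_dvd) (by lia)

lemma exists_monotone_notMem_forall_eventually_sub_mem (hη : (η : Filter ℕ) ≤ atTop) :
    ∃ S : ℕ → Set ℕ, Monotone S ∧ (∀ i, S i ∉ η) ∧
      ∀ m, 1 ≤ m → ∀ᶠ n in (η : Filter ℕ), n - m ∈ S m := by
  choose! X hXη hX using fun m => exists_mem_forall_add_notMem η (m := m)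
  refine ⟨fun i => {l | ∃ m ∈ Set.Icc 1 i, l + m ∈ X m}, ?_, fun i => ?_, fun m hm => ?_⟩
  · rintro i j hij l ⟨m, hm, hl⟩
    exact ⟨m, Set.Icc_subset_Icc_right hij hm, hl⟩
  · have h_all : ∀ᶠ n in (η : Filter ℕ), ∀ m ∈ Set.Icc 1 i, n ∈ X m :=
      (eventually_all_finite (Set.finite_Icc 1 i)).2 fun m hm => hXη m hm.1
    refine Ultrafilter.compl_mem_iff_notMem.1 ?_
    filter_upwards [h_all]
    rintro n hn ⟨m, hm, hnm⟩
    exact hX m hm.1 n (hn m hm) hnm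
  · filter_upwards [hXη m hm, hη (eventually_ge_atTop m)] with n hn hmn
    exact ⟨m, ⟨hm, le_rfl⟩, by rwa [Nat.sub_add_cancel hmn]⟩

end Recurrence

section InitialDensity

variable (t : ℝ) (A : Set ℕ)

/-- The normalising factor `2^t·2^n` of the density measure. -/
def scale (n : ℕ) : ℝ := (2 : ℝ) ^ t * 2 ^ n

/-- The proportion `|A ∩ [1,⌊2^t·2^n⌋]| / (2^t·2^n)`, whose `η`-limit is `ν_{(η,t)}(A)`. -/
def initialDensity (n : ℕ) : ℝ := (A ∩ Set.Icc 1 ⌊scale t n⌋₊).ncard / scale t n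

/-- The `n`-th block `(⌊2^t·2^(n-1)⌋, ⌊2^t·2^n⌋]`. With truncated subtraction, block `0` is empty,
so the blocks cover only the integers above `⌊2^t⌋`. -/
def block (n : ℕ) : Set ℕ := Set.Ioc ⌊scale t (n - 1)⌋₊ ⌊scale t n⌋₊

/-- The size of `A` in the `n`-th block, normalised by the same factor `2^t·2^n` as
`initialDensity` (and not by the length of the block). -/
def blockDensity (n : ℕ) : ℝ := (A ∩ block t n).ncard / scale t n

/-- The union of the blocks with index in `S`. -/
def blockUnion (S : Set ℕ) : Set ℕ := ⋃ l ∈ S, block t l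

lemma scale_pos (n : ℕ) : 0 < scale t n := by
  unfold scale
  positivity

lemma scale_succ (n : ℕ) : scale t (n + 1) = 2 * scale t n := by
  unfold scale
  ring

lemma tendsto_scale_atTop : Tendsto (scale t) atTop atTop :=
  (tendsto_pow_atTop_atTop_of_one_lt one_lt_two).const_mul_atTop (by positivity)

lemma monotone_floor_scale : Monotone fun n => ⌊scale t n⌋₊ :=
  monotone_nat_of_le_succ fun n => Nat.floor_le_floor (by
    linarith [scale_succ t n, scale_pos t n])

lemma pairwise_disjoint_block : Pairwise (Function.onFun Disjoint (block t)) :=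
  (monotone_floor_scale t).pairwise_disjoint_on_Ioc_pred

lemma disjoint_blockUnion_block {S : Set ℕ} {n : ℕ} (hn : n ∉ S) :
    Disjoint (blockUnion t S) (block t n) :=
  Set.disjoint_iUnion₂_left.2 fun _ hl =>
    pairwise_disjoint_block t (ne_of_mem_of_not_mem hl hn)

lemma initialDensity_nonneg (n : ℕ) : 0 ≤ initialDensity t A n :=
  div_nonneg (Nat.cast_nonneg _) (scale_pos t n).le

lemma blockDensity_nonneg (n : ℕ) : 0 ≤ blockDensity t A n :=
  div_nonneg (Nat.cast_nonneg _) (scale_pos t n).le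

lemma initialDensity_add_compl (n : ℕ) :
    initialDensity t A n + initialDensity t Aᶜ n = ⌊scale t n⌋₊ / scale t n := by
  have h_card : (A ∩ Set.Icc 1 ⌊scale t n⌋₊).ncard + (Aᶜ ∩ Set.Icc 1 ⌊scale t n⌋₊).ncard =
      ⌊scale t n⌋₊ := by
    rw [Set.inter_comm A, Set.inter_comm Aᶜ, ← Set.sdiff_eq,
      Set.ncard_inter_add_ncard_sdiff_eq_ncard _ _ (Set.finite_Icc _ _)]
    simp [Set.ncard_eq_toFinset_card']
  rw [initialDensity, initialDensity, ← add_div, ← Nat.cast_add, h_card]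

lemma initialDensity_le_one (n : ℕ) : initialDensity t A n ≤ 1 :=
  calc initialDensity t A n
    _ ≤ initialDensity t A n + initialDensity t Aᶜ n :=
      le_add_of_nonneg_right (initialDensity_nonneg t Aᶜ n)
    _ = ⌊scale t n⌋₊ / scale t n := initialDensity_add_compl t A n
    _ ≤ 1 := div_le_one_of_le₀ (Nat.floor_le (scale_pos t n).le) (scale_pos t n).le

lemma initialDensity_succ (n : ℕ) :
    initialDensity t A (n + 1) = initialDensity t A n / 2 + blockDensity t A (n + 1) := by
  have h_floor : ⌊scale t n⌋₊ ≤ ⌊scale t (n + 1)⌋₊ := monotone_floor_scale t n.le_succ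
  have h_union : A ∩ Set.Icc 1 ⌊scale t (n + 1)⌋₊ =
      A ∩ Set.Icc 1 ⌊scale t n⌋₊ ∪ A ∩ block t (n + 1) := by
    ext k
    simp only [block, Nat.add_sub_cancel, Set.mem_inter_iff, Set.mem_union, Set.mem_Icc,
      Set.mem_Ioc]
    grind
  have h_disjoint : Disjoint (A ∩ Set.Icc 1 ⌊scale t n⌋₊) (A ∩ block t (n + 1)) :=
    Set.disjoint_left.2 fun _ hk hk' => hk'.2.1.not_ge hk.2.2
  have h_pos := scale_pos t n
  rw [initialDensity, h_union, Set.ncard_union_eq h_disjoint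
    ((Set.finite_Icc _ _).inter_of_right A) ((Set.finite_Ioc _ _).inter_of_right A),
    initialDensity, blockDensity, scale_succ]
  push_cast
  field_simp

lemma initialDensity_le_two_pow_mul (n m : ℕ) :
    initialDensity t A n ≤ 2 ^ m * initialDensity t A (n + m) := by
  induction m with
  | zero => simp
  | succ m ih =>
    calc initialDensity t A n
      _ ≤ 2 ^ m * initialDensity t A (n + m) := ih
      _ ≤ 2 ^ m * (2 * initialDensity t A (n + m + 1)) := by
        gcongr
        linarith [initialDensity_succ t A (n + m), blockDensity_nonneg t A (n + m + 1)]
      _ = 2 ^ (m + 1) * initialDensity t A (n + (m + 1)) := by ring_nf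

lemma blockDensity_le_initialDensity (n : ℕ) : blockDensity t A n ≤ initialDensity t A n := by
  have h_subset : block t n ⊆ Set.Icc 1 ⌊scale t n⌋₊ := fun k hk =>
    ⟨Nat.one_le_of_lt hk.1, hk.2⟩
  unfold blockDensity initialDensity
  gcongr
  · exact (scale_pos t n).le
  · exact (Set.finite_Icc _ _).inter_of_right A

end InitialDensity

section DensityMeasure

variable {η : Ultrafilter ℕ} {t : ℝ} {A : Set ℕ}

lemma tendsto_initialDensity (η : Ultrafilter ℕ) (t : ℝ) (A : Set ℕ) :
    Tendsto (initialDensity t A) η (𝓝 (nuDen η t A)) := by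
  have h_mem : ∀ n, initialDensity t A n ∈ Set.Icc (0 : ℝ) 1 := fun n =>
    ⟨initialDensity_nonneg t A n, initialDensity_le_one t A n⟩
  obtain ⟨a, -, ha⟩ := isCompact_Icc.ultrafilter_le_nhds (η.map (initialDensity t A))
    (le_principal_iff.2 (mem_map.2 (univ_mem' h_mem)))
  exact tendsto_nhds_limUnder ⟨a, ha⟩

lemma nuDen_compl (hη : (η : Filter ℕ) ≤ atTop) (t : ℝ) (A : Set ℕ) :
    nuDen η t Aᶜ = 1 - nuDen η t A := by
  have h_add : Tendsto (fun n => initialDensity t A n + initialDensity t Aᶜ n) η (𝓝 1) := by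
    simp only [initialDensity_add_compl]
    exact (tendsto_nat_floor_div_atTop.comp (tendsto_scale_atTop t)).mono_left hη
  exact eq_sub_of_add_eq' (tendsto_nhds_unique
    ((tendsto_initialDensity η t A).add (tendsto_initialDensity η t Aᶜ)) h_add)

lemma nuDen_blockUnion_le_half (hη : (η : Filter ℕ) ≤ atTop) (t : ℝ) {S : Set ℕ} (hS : S ∉ η) :
    nuDen η t (blockUnion t S) ≤ 1 / 2 := by
  refine le_of_tendsto (tendsto_initialDensity η t _) ?_
  filter_upwards [Ultrafilter.compl_mem_iff_notMem.2 hS, hη (eventually_ge_atTop 1)] with n hn hn1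
  obtain ⟨p, rfl⟩ := Nat.exists_eq_add_of_le' hn1
  have h_block : blockDensity t (blockUnion t S) (p + 1) = 0 := by
    simp [blockDensity, (disjoint_blockUnion_block t hn).inter_eq]
  linarith [initialDensity_succ t (blockUnion t S) p, initialDensity_le_one t (blockUnion t S) p]

lemma tendsto_blockDensity_sub_of_nuDen_eq_zero (hη : (η : Filter ℕ) ≤ atTop)
    (hA : nuDen η t A = 0) (m : ℕ) :
    Tendsto (fun n => blockDensity t A (n - m)) η (𝓝 0) := by
  have h_bound : Tendsto (fun n => 2 ^ m * initialDensity t A n) η (𝓝 0) := by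
    simpa [hA] using (tendsto_initialDensity η t A).const_mul (2 ^ m)
  refine squeeze_zero' (Eventually.of_forall fun n => blockDensity_nonneg t A _) ?_ h_bound
  filter_upwards [hη (eventually_ge_atTop m)] with n hmn
  obtain ⟨p, rfl⟩ := Nat.exists_eq_add_of_le' hmn
  rw [Nat.add_sub_cancel]
  exact (blockDensity_le_initialDensity t A p).trans (initialDensity_le_two_pow_mul t A p m)

lemma tendsto_blockDensity_compl_sub (hη : (η : Filter ℕ) ≤ atTop) {S B : Set ℕ} {m : ℕ}
    (hS : ∀ᶠ n in (η : Filter ℕ), n - m ∈ S) (hB : nuDen η t (blockUnion t S \ B) = 0) :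
    Tendsto (fun n => blockDensity t Bᶜ (n - m)) η (𝓝 0) := by
  refine (tendsto_blockDensity_sub_of_nuDen_eq_zero hη hB m).congr' ?_
  filter_upwards [hS] with n hn
  have h_block : block t (n - m) ⊆ blockUnion t S := Set.subset_biUnion_of_mem hn
  rw [blockDensity, blockDensity, Set.sdiff_eq, Set.inter_right_comm,
    Set.inter_eq_right.2 h_block, Set.inter_comm]

lemma nuDen_le_quarter_of_tendsto_blockDensity (hη : (η : Filter ℕ) ≤ atTop)
    (h_last : Tendsto (blockDensity t A) η (𝓝 0))
    (h_prev : Tendsto (fun n => blockDensity t A (n - 1)) η (𝓝 0)) :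
    nuDen η t A ≤ 1 / 4 := by
  have h_bound : Tendsto (fun n => 1 / 4 + blockDensity t A (n - 1) / 2 + blockDensity t A n) η
      (𝓝 (1 / 4)) := by
    simpa only [zero_div, add_zero] using ((h_prev.div_const 2).const_add (1 / 4)).add h_last
  refine le_of_tendsto_of_tendsto (tendsto_initialDensity η t A) h_bound ?_
  filter_upwards [hη (eventually_ge_atTop 2)] with n hn
  obtain ⟨p, rfl⟩ := Nat.exists_eq_add_of_le' hn
  have h_index : p + 2 - 1 = p + 1 := rfl
  rw [h_index]
  linarith [initialDensity_succ t A (p + 1), initialDensity_succ t A p,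
    initialDensity_le_one t A p]

end DensityMeasure

theorem stmt16_general (η : Ultrafilter ℕ) (t : ℝ)
    (hX : ∀ X ∈ η, ∃ m : ℕ, 1 ≤ m ∧ (fun x => x + m) '' X ∈ η) :
    ¬ AddProp (nuDen η t) := by
  intro h_add
  have hη : (η : Filter ℕ) ≤ atTop := le_atTop_of_forall_exists_image_add_mem hX
  obtain ⟨S, hS_mono, hS_notMem, hS_sub⟩ := exists_monotone_notMem_forall_eventually_sub_mem hη
  obtain ⟨B, hB_lim, hB_null⟩ := h_add (fun i => blockUnion t (S i))
    fun i => Set.biUnion_subset_biUnion_left (hS_mono i.le_succ)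
  have hB_le : nuDen η t B ≤ 1 / 2 :=
    le_of_tendsto' hB_lim fun i => nuDen_blockUnion_le_half hη t (hS_notMem i)
  have h_prev : ∀ m, 1 ≤ m → Tendsto (fun n => blockDensity t Bᶜ (n - m)) η (𝓝 0) :=
    fun m hm => tendsto_blockDensity_compl_sub hη (hS_sub m hm) (hB_null m)
  have h_last : Tendsto (blockDensity t Bᶜ) η (𝓝 0) := tendsto_of_forall_tendsto_sub hX h_prev
  have hB_compl : nuDen η t Bᶜ ≤ 1 / 4 :=
    nuDen_le_quarter_of_tendsto_blockDensity hη h_last (h_prev 1 le_rfl)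
  linarith [nuDen_compl hη t B]

/-- If for every `X ∈ η` there is `m ≥ 1` with `X + m ∈ η`, then the
density measure `ν_{(η,t)}` does not have the additive property. -/
theorem stmt16 (η : Ultrafilter ℕ) (hη : (η : Filter ℕ) ≤ Filter.cofinite)
    (t : ℝ) (ht : t ∈ Set.Ico (0:ℝ) 1)
    (hX : ∀ X ∈ η, ∃ m : ℕ, 1 ≤ m ∧ (fun x => x + m) '' X ∈ η) :
    ¬ AddProp (nuDen η t) :=
  stmt16_general η t hX
end
end
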